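/- If G is a simple graph (possibly disconnected) with u vertices of odd degree and g nonisolated vertices of even degree, then the edges of G can be partitioned into at most u/2 + ⌊(2/3)g⌋ paths. -/

import Mathlib

/-!
By strong induction on the number of edges one proves more: for every demand `π`, the edges can be
partitioned into paths with at least `π v` path ends at each vertex `v`, one-vertex paths being
allowed and their number being bounded by a potential that equals `u / 2 + 2 * g / 3` for `π = 0`.

Three operations put removed edges `ax` back. If some path ends at `x`, then `x` is exchanged for
the vertex `w` before `a` on that path, which is rerouted along `xa`; repeating this, one may reach
a path that avoids `a` and is extended to `a`, so that `ax` is absorbed for free. Counting path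
ends against the edges at `a` shows that about half of a star at `a` can be absorbed in this way.
Finally, any three edges at an end `a` of a path can be restored at the cost of one further path.

A vertex at which no path might end is dangerous: its demand is zero and its degree is even and
positive. If there is none, or no two of them are adjacent, it suffices to remove a single star.
Otherwise let `a` be dangerous with dangerous neighbours. One removes the edges from `a` to them,
or to all but one or two of them, together with up to two stars centred at these neighbours. Each
vertex whose degree becomes odd makes the potential drop, and how these gains compare to the price
of restoring the stars depends on the numbers of leaves modulo `6`.
-/

namespace PathDecomposition

open Finset

section Exchanges

variable {V : Type*}

/-- The edges of the walk that visits the vertices of the list in order, with multiplicity. -/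
def pathEdges : List V → Multiset (Sym2 V)
  | [] => 0
  | [_] => 0
  | x :: y :: l => s(x, y) ::ₘ pathEdges (y :: l)

/-- A family of paths, each given by its list of vertices. One-vertex paths are allowed: they
carry no edge but still have two ends. -/
def IsPathFamily (L : Multiset (List V)) : Prop := ∀ l ∈ L, l ≠ [] ∧ l.Nodup

/-- All edges of the paths of a family, with multiplicity. -/
def familyEdges (L : Multiset (List V)) : Multiset (Sym2 V) := (L.map pathEdges).sum

theorem pathEdges_append_cons (p : List V) (x : V) (q : List V) :
    pathEdges (p ++ x :: q) = pathEdges (p ++ [x]) + pathEdges (x :: q) := by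
  induction p with
  | nil => simp [pathEdges]
  | cons u p ih =>
    cases p with
    | nil => simp [pathEdges]
    | cons w p => simp_all [pathEdges]

theorem pathEdges_reverse (l : List V) : pathEdges l.reverse = pathEdges l := by
  induction l with
  | nil => rfl
  | cons x l ih =>
    cases l with
    | nil => rfl
    | cons y l =>
      rw [List.reverse_cons, List.reverse_cons, List.append_assoc, List.singleton_append,
        pathEdges_append_cons, ← List.reverse_cons, ih]
      simp [pathEdges, Sym2.eq_swap, ← Multiset.singleton_add, add_comm]

theorem pathEdges_append_cons_cons (p : List V) (x y : V) (q : List V) :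
    pathEdges (p ++ x :: y :: q) =
      s(x, y) ::ₘ (pathEdges (p ++ [x]) + pathEdges (y :: q)) := by
  rw [pathEdges_append_cons, pathEdges, Multiset.add_cons]

theorem pathEdges_reverse_append {p : List V} {x w : V} (hx : p.head? = some x)
    (hw : p.getLast? = some w) (a : V) (q : List V) :
    s(a, w) ::ₘ pathEdges (p.reverse ++ a :: q) = s(a, x) ::ₘ pathEdges (p ++ a :: q) := by
  obtain ⟨r, rfl⟩ := List.head?_eq_some_iff.1 hx
  obtain ⟨s, hs⟩ := List.getLast?_eq_some_iff.1 hw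
  have hold : pathEdges ((x :: r) ++ a :: q) =
      s(w, a) ::ₘ (pathEdges (x :: r) + pathEdges (a :: q)) := by
    rw [hs, List.append_assoc, List.singleton_append, pathEdges_append_cons_cons]
  have hnew : pathEdges ((x :: r).reverse ++ a :: q) =
      s(x, a) ::ₘ (pathEdges (x :: r) + pathEdges (a :: q)) := by
    rw [List.reverse_cons, List.append_assoc, List.singleton_append,
      pathEdges_append_cons_cons, ← List.reverse_cons, pathEdges_reverse]
  rw [hold, hnew, Multiset.cons_swap, Sym2.eq_swap, Sym2.eq_swap (a := w)]

theorem mem_of_mem_pathEdges {l : List V} {e : Sym2 V} {v : V} (he : e ∈ pathEdges l)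
    (hv : v ∈ e) : v ∈ l := by
  induction l using pathEdges.induct with
  | case1 => simp [pathEdges] at he
  | case2 => simp [pathEdges] at he
  | case3 x y l ih =>
    rcases Multiset.mem_cons.1 he with rfl | he
    · rcases Sym2.mem_iff.1 hv with rfl | rfl <;> simp
    · exact List.mem_cons_of_mem _ (ih he)

theorem nodup_pathEdges {l : List V} (hl : l.Nodup) : (pathEdges l).Nodup := by
  induction l using pathEdges.induct with
  | case1 => exact Multiset.nodup_zero
  | case2 => exact Multiset.nodup_zero
  | case3 x y l ih =>
    have hx := List.nodup_cons.1 hl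
    exact Multiset.nodup_cons.2
      ⟨fun h => hx.1 (mem_of_mem_pathEdges h (Sym2.mem_mk_left x y)), ih hx.2⟩

@[simp] theorem familyEdges_cons (l : List V) (L : Multiset (List V)) :
    familyEdges (l ::ₘ L) = pathEdges l + familyEdges L := by
  simp [familyEdges]

theorem isPathFamily_cons {l : List V} {L : Multiset (List V)} :
    IsPathFamily (l ::ₘ L) ↔ (l ≠ [] ∧ l.Nodup) ∧ IsPathFamily L := by
  simp [IsPathFamily]

/-- `l` is a path of the family read in one of its two directions. -/
def Traverses (L : Multiset (List V)) (l : List V) : Prop := l ∈ L ∨ l.reverse ∈ L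

theorem traverses_cons_reverse (l : List V) (L : Multiset (List V)) :
    Traverses (l.reverse ::ₘ L) = Traverses (l ::ₘ L) := by
  funext m
  simp only [Traverses, Multiset.mem_cons, List.reverse_eq_iff, List.reverse_reverse, eq_iff_iff]
  tauto

theorem Traverses.nodup {L : Multiset (List V)} {l : List V} (hL : IsPathFamily L)
    (h : Traverses L l) : l.Nodup :=
  h.elim (fun h => (hL l h).2) fun h => List.nodup_reverse.1 (hL _ h).2

/-- Some path of the family goes from `x` to `a` (and possibly beyond) and visits `w` right
before `a`. Reversing its initial part `x … w` exchanges the edge `wa` for the edge `xa` and the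
end at `x` for an end at `w`. -/
def EntersFrom (L : Multiset (List V)) (a x w : V) : Prop :=
  ∃ p q, Traverses L (p ++ a :: q) ∧ p.head? = some x ∧ p.getLast? = some w

/-- After `n` exchanges along `EntersFrom`, starting from the end `x`, one arrives at an end of a
path that avoids `a`. -/
def Reaches (L : Multiset (List V)) (a : V) : ℕ → V → Prop
  | 0, x => ∃ r, Traverses L (x :: r) ∧ a ∉ x :: r
  | n + 1, x => ∃ w, EntersFrom L a x w ∧ Reaches L a n w

theorem Reaches.congr {L L' : Multiset (List V)} (h : Traverses L = Traverses L') (a : V) (n : ℕ) :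
    Reaches L a n = Reaches L' a n := by
  induction n with
  | zero => funext x; simp only [Reaches, h]
  | succ n ih => funext x; simp only [Reaches, EntersFrom, h, ih]

theorem EntersFrom.ne {L : Multiset (List V)} {a x w : V} (hL : IsPathFamily L)
    (h : EntersFrom L a x w) : w ≠ a := by
  obtain ⟨p, q, hpq, -, hw⟩ := h
  have hdisj := List.disjoint_of_nodup_append (hpq.nodup hL)
  rintro rfl
  exact hdisj (List.mem_of_getLast? hw) List.mem_cons_self

theorem EntersFrom.exists_mem {L : Multiset (List V)} {a x w : V} (h : EntersFrom L a x w) :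
    ∃ l ∈ L, w ∈ l := by
  obtain ⟨p, q, hpq, -, hw⟩ := h
  have hwmem : w ∈ p ++ a :: q := List.mem_append_left _ (List.mem_of_getLast? hw)
  exact hpq.elim (fun h => ⟨_, h, hwmem⟩) fun h => ⟨_, h, List.mem_reverse.2 hwmem⟩

/-- Reversing an initial part does not destroy a sequence of exchanges that avoids `x`. -/
theorem Reaches.reverse_prefix {L : Multiset (List V)} {a x : V} {p q : List V}
    (hL : IsPathFamily ((p ++ a :: q) ::ₘ L)) (hx : p.head? = some x) {n : ℕ}
    (hmin : ∀ m ≤ n, ¬ Reaches ((p ++ a :: q) ::ₘ L) a m x) {w : V}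
    (hw : Reaches ((p ++ a :: q) ::ₘ L) a n w) :
    Reaches ((p.reverse ++ a :: q) ::ₘ L) a n w := by
  have hnodup : (p ++ a :: q).Nodup := (hL _ (Multiset.mem_cons_self _ _)).2
  have ha : a ∉ p ∧ a ∉ q := by simp_all [List.nodup_middle]
  induction n generalizing w with
  | zero =>
    obtain ⟨r, hr, har⟩ := hw
    refine ⟨r, ?_, har⟩
    simp only [Traverses, Multiset.mem_cons] at hr ⊢
    rcases hr with (h | h) | h | h
    · simp [h] at har
    · exact Or.inl (Or.inr h)
    · rw [← List.mem_reverse, h] at har; simp at har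
    · exact Or.inr (Or.inr h)
  | succ n ih =>
    have hne := hmin (n + 1) le_rfl
    obtain ⟨w', ⟨p', q', htrav, hp', hq'⟩, hw'⟩ := hw
    suffices h : ∃ t, Traverses ((p.reverse ++ a :: q) ::ₘ L) (p' ++ a :: t) by
      obtain ⟨t, ht⟩ := h
      exact ⟨w', ⟨p', t, ht, hp', hq'⟩, ih (fun m hm => hmin m (by omega)) hw'⟩
    have htrav' := htrav
    simp only [Traverses, Multiset.mem_cons] at htrav
    rcases htrav with (h | h) | h | h
    · obtain ⟨rfl, -, rfl⟩ := (List.append_cons_inj_of_notMem ha.1 ha.2).1 h.symm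
      obtain rfl : w = x := Option.some.inj (hp'.symm.trans hx)
      exact absurd ⟨w', ⟨p, q, htrav', hp', hq'⟩, hw'⟩ hne
    · exact ⟨q', Or.inl (Multiset.mem_cons_of_mem h)⟩
    · rw [List.reverse_append, List.reverse_cons, List.append_assoc, List.singleton_append] at h
      obtain ⟨rfl, -, rfl⟩ := (List.append_cons_inj_of_notMem ha.1 ha.2).1 h.symm
      exact ⟨q'.reverse, Or.inr (by simp)⟩
    · exact ⟨q', Or.inr (Multiset.mem_cons_of_mem h)⟩

/-- `F` contains no loop, so that it is the edge set of a simple graph. -/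
def Loopless (F : Finset (Sym2 V)) : Prop := ∀ v, s(v, v) ∉ F

theorem Loopless.mono {F F' : Finset (Sym2 V)} (hF : Loopless F) (h : F' ⊆ F) : Loopless F' :=
  fun v hv => hF v (h hv)

section Ends

variable [DecidableEq V]

/-- The number of ends of a path at `v`; a one-vertex path has two ends there. -/
def endCount (l : List V) (v : V) : ℕ :=
  (if l.head? = some v then 1 else 0) + (if l.getLast? = some v then 1 else 0)

/-- The number of path ends at `v` in a family. -/
def familyEnds (L : Multiset (List V)) (v : V) : ℕ := (L.map fun l => endCount l v).sum

theorem endCount_reverse (l : List V) (v : V) : endCount l.reverse v = endCount l v := by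
  simp [endCount, add_comm]

@[simp] theorem familyEnds_cons (l : List V) (L : Multiset (List V)) (v : V) :
    familyEnds (l ::ₘ L) v = endCount l v + familyEnds L v := by
  simp [familyEnds]

theorem Traverses.exists_cons {L : Multiset (List V)} {l : List V} (hL : IsPathFamily L)
    (h : Traverses L l) :
    ∃ L₀, IsPathFamily (l ::ₘ L₀) ∧ Multiset.card (l ::ₘ L₀) = Multiset.card L ∧
      familyEdges (l ::ₘ L₀) = familyEdges L ∧ familyEnds (l ::ₘ L₀) = familyEnds L ∧
      Traverses (l ::ₘ L₀) = Traverses L := by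
  rcases h with h | h <;> obtain ⟨L₀, rfl⟩ := Multiset.exists_cons_of_mem h
  · exact ⟨L₀, hL, rfl, rfl, rfl, rfl⟩
  · refine ⟨L₀, ?_, by simp, ?_, ?_, ?_⟩
    · simpa [isPathFamily_cons] using hL
    · simp [pathEdges_reverse]
    · funext v
      simp [endCount_reverse]
    · rw [← traverses_cons_reverse]

theorem extend_of_reaches_zero {L : Multiset (List V)} {a x : V} (hL : IsPathFamily L)
    (h : Reaches L a 0 x) : ∃ L', IsPathFamily L' ∧ Multiset.card L' = Multiset.card L ∧
      familyEdges L' = s(a, x) ::ₘ familyEdges L ∧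
      ∀ v, familyEnds L' v + (if v = x then 1 else 0) =
        familyEnds L v + (if v = a then 1 else 0) := by
  obtain ⟨r, hr, har⟩ := h
  obtain ⟨L₀, hL₀, hcard, hedges, hends, -⟩ := hr.exists_cons hL
  rw [isPathFamily_cons] at hL₀
  refine ⟨(a :: x :: r) ::ₘ L₀, ?_, by simp [← hcard], by simp [← hedges, pathEdges], fun v => ?_⟩
  · exact isPathFamily_cons.2 ⟨⟨by simp, List.nodup_cons.2 ⟨har, hL₀.1.2⟩⟩, hL₀.2⟩
  · simp only [← hends, familyEnds_cons, endCount, List.head?_cons, Option.some.injEq,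
      List.getLast?_cons_cons, @eq_comm V v]
    omega

theorem endCount_reverse_append {p : List V} {x w : V} (hx : p.head? = some x)
    (hw : p.getLast? = some w) (a : V) (q : List V) (v : V) :
    endCount (p.reverse ++ a :: q) v + (if v = x then 1 else 0) =
      endCount (p ++ a :: q) v + (if v = w then 1 else 0) := by
  have hlast : (p.reverse ++ a :: q).getLast? = (p ++ a :: q).getLast? := by
    simp only [List.getLast?_append, List.getLast?_cons, Option.some_or]
  simp only [endCount, hlast, List.head?_append, List.head?_reverse, hx, hw, Option.some_or,
    Option.some.injEq, @eq_comm V v]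
  omega

theorem exists_add_edge_of_reaches {a : V} (n : ℕ) {L : Multiset (List V)} {x : V}
    (hL : IsPathFamily L) (h : Reaches L a n x) :
    ∃ L', IsPathFamily L' ∧ Multiset.card L' = Multiset.card L ∧
      familyEdges L' = s(a, x) ::ₘ familyEdges L ∧
      ∀ v, familyEnds L' v + (if v = x then 1 else 0) =
        familyEnds L v + (if v = a then 1 else 0) := by
  induction n using Nat.strong_induction_on generalizing L x with
  | _ n ih =>
    -- A shortest sequence of exchanges does not come back to `x`, so it survives the first one.
    by_cases hmin : ∃ m < n, Reaches L a m x
    · obtain ⟨m, hm, hr⟩ := hmin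
      exact ih m hm hL hr
    push Not at hmin
    cases n with
    | zero => exact extend_of_reaches_zero hL h
    | succ n =>
      obtain ⟨w, ⟨p, q, hpq, hx, hw⟩, hn⟩ := h
      obtain ⟨L₀, hL₀, hcard, hedges, hends, htrav⟩ := hpq.exists_cons hL
      simp only [← Reaches.congr htrav] at hmin hn
      have hn' := hn.reverse_prefix hL₀ hx fun m hm => hmin m (by omega)
      have hL₁ : IsPathFamily ((p.reverse ++ a :: q) ::ₘ L₀) := by
        simp_all [isPathFamily_cons, List.nodup_append]
      obtain ⟨L', hL', hcard', hedges', hends'⟩ := ih n (by omega) hL₁ hn'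
      refine ⟨L', hL', by simp [hcard', ← hcard], ?_, fun v => ?_⟩
      · rw [hedges', ← hedges, familyEdges_cons, familyEdges_cons, ← Multiset.cons_add,
          ← Multiset.cons_add, pathEdges_reverse_append hx hw]
      · have hv := hends' v
        have hrev := endCount_reverse_append hx hw a q v
        rw [← hends]
        simp only [familyEnds_cons] at hv ⊢
        omega

end Ends

end Exchanges

section Absorption

variable {V : Type*} [DecidableEq V]

/-- `F` is partitioned by a family of at most `N` paths with at least `f v` ends at each `v`. -/
def Decomposable (F : Finset (Sym2 V)) (f : V → ℕ) (N : ℕ) : Prop :=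
  ∃ L : Multiset (List V), IsPathFamily L ∧ familyEdges L = F.val ∧
    (∀ v, f v ≤ familyEnds L v) ∧ Multiset.card L ≤ N

theorem Decomposable.mono {F : Finset (Sym2 V)} {f f' : V → ℕ} {N N' : ℕ}
    (h : Decomposable F f N) (hf : ∀ v, f' v ≤ f v) (hN : N ≤ N') : Decomposable F f' N' := by
  obtain ⟨L, hL, hE, hends, hcard⟩ := h
  exact ⟨L, hL, hE, fun v => (hf v).trans (hends v), hcard.trans hN⟩

section Counting

variable {L : Multiset (List V)} {a : V} {S : Finset V}

/-- On one side of `a`, a path whose end lies in a set closed under exchanges uses an edge from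
`a` to that set. -/
theorem sum_head_le_sum_count (hS : ∀ x ∈ S, ∀ w, EntersFrom L a x w → w ∈ S) (ha : a ∉ S)
    {p q : List V} (h : Traverses L (p ++ a :: q)) :
    (∑ v ∈ S, if (p ++ [a]).head? = some v then 1 else 0) ≤
      ∑ b ∈ S, (pathEdges (p ++ [a])).count s(a, b) := by
  cases p with
  | nil => simp [ha]
  | cons x r =>
    by_cases hx : x ∈ S
    · obtain ⟨s, w, hs⟩ := (List.eq_nil_or_concat' (x :: r)).resolve_left (List.cons_ne_nil x r)
      have hw : w ∈ S := hS x hx w ⟨_, q, h, rfl, by simp [hs]⟩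
      have hcount : 1 ≤ (pathEdges (x :: r ++ [a])).count s(a, w) := by
        rw [Multiset.one_le_count_iff_mem, hs, List.append_assoc, List.singleton_append,
          pathEdges_append_cons_cons, Sym2.eq_swap]
        exact Multiset.mem_cons_self _ _
      simpa [hx] using hcount.trans
        (single_le_sum (f := fun b => (pathEdges (x :: r ++ [a])).count s(a, b)) (by simp) hw)
    · simp [hx]

theorem sum_endCount_le_sum_count (hS : ∀ x ∈ S, ∀ w, EntersFrom L a x w → w ∈ S) (ha : a ∉ S)
    (hend : ∀ x ∈ S, ¬ Reaches L a 0 x) {l : List V} (hl : l ∈ L) :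
    ∑ v ∈ S, endCount l v ≤ ∑ b ∈ S, (pathEdges l).count s(a, b) := by
  by_cases hal : a ∈ l
  · obtain ⟨p, q, rfl⟩ := List.append_of_mem hal
    have hleft := sum_head_le_sum_count hS ha (Or.inl hl)
    have hright := sum_head_le_sum_count (p := q.reverse) (q := p.reverse) hS ha
      (Or.inr (by simpa using hl))
    have hhead : (p ++ a :: q).head? = (p ++ [a]).head? := by simp
    have hlast : (p ++ a :: q).getLast? = (q.reverse ++ [a]).head? := by
      simp [← List.head?_reverse]
    have hedges : pathEdges (p ++ a :: q) =
        pathEdges (p ++ [a]) + pathEdges (q.reverse ++ [a]) := by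
      rw [pathEdges_append_cons, ← pathEdges_reverse (a :: q), List.reverse_cons]
    simp only [endCount, hhead, hlast, hedges, Multiset.count_add, sum_add_distrib]
    exact Nat.add_le_add hleft hright
  · refine (sum_eq_zero fun v hv => ?_).trans_le (Nat.zero_le _)
    have hhead : l.head? ≠ some v := fun h => by
      obtain ⟨r, rfl⟩ := List.head?_eq_some_iff.1 h
      exact hend v hv ⟨r, Or.inl hl, hal⟩
    have hlast : l.getLast? ≠ some v := fun h => by
      obtain ⟨r, rfl⟩ := List.getLast?_eq_some_iff.1 h
      exact hend v hv ⟨r.reverse, Or.inr (by simpa using hl), by simpa [or_comm] using hal⟩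
    simp [endCount, hhead, hlast]

theorem sum_familyEnds_le_sum_count (hS : ∀ x ∈ S, ∀ w, EntersFrom L a x w → w ∈ S) (ha : a ∉ S)
    (hend : ∀ x ∈ S, ¬ Reaches L a 0 x) :
    ∑ v ∈ S, familyEnds L v ≤ ∑ b ∈ S, (familyEdges L).count s(a, b) := by
  calc ∑ v ∈ S, familyEnds L v = (L.map fun l => ∑ v ∈ S, endCount l v).sum :=
        Multiset.sum_map_sum_map S.val L
    _ ≤ (L.map fun l => ∑ b ∈ S, (pathEdges l).count s(a, b)).sum :=
        Multiset.sum_map_le_sum_map _ _ fun l hl => sum_endCount_le_sum_count hS ha hend hl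
    _ = ∑ b ∈ S, (L.map fun l => (pathEdges l).count s(a, b)).sum :=
        (Multiset.sum_map_sum_map S.val L).symm
    _ = ∑ b ∈ S, (familyEdges L).count s(a, b) := by simp only [familyEdges, Multiset.count_sum]

/-- If no vertex of `T` could be reached, then the unreachable vertices other than `a` would carry
more path ends than there are edges of the family joining them to `a`. -/
theorem exists_reaches {F : Finset (Sym2 V)} {T Z : Finset V} (hL : IsPathFamily L)
    (hE : familyEdges L = F.val) (ha : a ∉ T) (hT : ∀ x ∈ T, s(a, x) ∉ F)
    (hZ : ∀ v, s(a, v) ∈ F → familyEnds L v = 0 → v ∈ Z) (hcard : #Z < ∑ x ∈ T, familyEnds L x) :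
    ∃ x ∈ T, ∃ n, Reaches L a n x := by
  classical
  by_contra! hcon
  let S : Finset V := {v ∈ T ∪ (L.bind (↑)).toFinset | v ≠ a ∧ ∀ n, ¬ Reaches L a n v}
  have hTS : T ⊆ S := fun x hx =>
    mem_filter.2 ⟨mem_union_left _ hx, ne_of_mem_of_not_mem hx ha, hcon x hx⟩
  have hS : ∀ x ∈ S, ∀ w, EntersFrom L a x w → w ∈ S := fun x hx w hw =>
    mem_filter.2 ⟨mem_union_right _ (Multiset.mem_toFinset.2 (Multiset.mem_bind.2 hw.exists_mem)),
      hw.ne hL, fun n hn => (mem_filter.1 hx).2.2 (n + 1) ⟨w, hw, hn⟩⟩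
  have haS : a ∉ S := fun h => (mem_filter.1 h).2.1 rfl
  have hend : ∀ x ∈ S, ¬ Reaches L a 0 x := fun x hx => (mem_filter.1 hx).2.2 0
  have hcount := sum_familyEnds_le_sum_count hS haS hend
  have hZS : ∑ b ∈ S \ T, F.val.count s(a, b) ≤ ∑ b ∈ S \ T, familyEnds L b + #Z := by
    calc ∑ b ∈ S \ T, F.val.count s(a, b)
        ≤ ∑ b ∈ S \ T, (familyEnds L b + if b ∈ Z then 1 else 0) := sum_le_sum fun b _ => by
          rw [Multiset.count_eq_of_nodup F.nodup]
          have := hZ b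
          grind
      _ = ∑ b ∈ S \ T, familyEnds L b + #((S \ T) ∩ Z) := by
          rw [sum_add_distrib, sum_boole, filter_mem_eq_inter, Nat.cast_id]
      _ ≤ ∑ b ∈ S \ T, familyEnds L b + #Z :=
          Nat.add_le_add_left (card_le_card inter_subset_right) _
  have hT0 : ∑ b ∈ T, F.val.count s(a, b) = 0 :=
    sum_eq_zero fun b hb => Multiset.count_eq_zero.2 (hT b hb)
  rw [hE, ← sum_sdiff hTS, ← sum_sdiff hTS] at hcount
  omega

end Counting

theorem Decomposable.exists_insert {F : Finset (Sym2 V)} {f : V → ℕ} {N : ℕ} {a : V}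
    {T Z : Finset V} (h : Decomposable F f N) (ha : a ∉ T) (hT : ∀ x ∈ T, s(a, x) ∉ F)
    (hZ : ∀ v, s(a, v) ∈ F → f v = 0 → v ∈ Z) (hcard : #Z < ∑ x ∈ T, f x) :
    ∃ x ∈ T, Decomposable (insert s(a, x) F) (f + Pi.single a 1 - Pi.single x 1) N := by
  obtain ⟨L, hL, hE, hends, hN⟩ := h
  obtain ⟨x, hx, n, hr⟩ := exists_reaches hL hE ha hT
    (fun v hv h0 => hZ v hv (Nat.eq_zero_of_le_zero (h0 ▸ hends v)))
    (hcard.trans_le (sum_le_sum fun v _ => hends v))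
  obtain ⟨L', hL', hcard', hE', hends'⟩ := exists_add_edge_of_reaches n hL hr
  refine ⟨x, hx, L', hL', ?_, fun v => ?_, hcard'.trans_le hN⟩
  · rw [hE', hE, insert_val_of_notMem (hT x hx)]
  · have := hends' v
    have := hends v
    simp only [Pi.sub_apply, Pi.add_apply, Pi.single_apply]
    omega

/-- The edges from `a` to the vertices of `T`. -/
def star (a : V) (T : Finset V) : Finset (Sym2 V) := T.image fun x => s(a, x)

theorem mk_mem_star {a u v : V} {T : Finset V} :
    s(u, v) ∈ star a T ↔ u = a ∧ v ∈ T ∨ v = a ∧ u ∈ T := by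
  simp only [star, mem_image, Sym2.eq_iff]
  grind

theorem star_empty (a : V) : star a (∅ : Finset V) = ∅ := rfl

theorem star_insert (a x : V) (T : Finset V) : star a (insert x T) = insert s(a, x) (star a T) :=
  image_insert _ _ _

theorem Decomposable.exists_union_star {F : Finset (Sym2 V)} {f : V → ℕ} {N : ℕ}
    {a : V} {T Z : Finset V} (h : Decomposable F f N) (ha : a ∉ T) (hT : ∀ x ∈ T, s(a, x) ∉ F)
    (hf : ∀ x ∈ T, 1 ≤ f x) (hZ : ∀ v, s(a, v) ∈ F → f v = 0 → v ∈ Z) :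
    ∃ S ⊆ T, 2 * #(T \ S) ≤ #T + #Z ∧ ∃ f', Decomposable (F ∪ star a S) f' N ∧
      (∀ v, v ∉ S → f v ≤ f' v) ∧ f a + #S ≤ f' a := by
  induction hk : #T generalizing F f T Z with
  | zero => exact ⟨∅, by simp, by simp [hk], f, by simpa [star_empty] using h, by simp, by simp⟩
  | succ k ih =>
    by_cases hle : #T ≤ #Z
    · exact ⟨∅, by simp, by simp; omega, f, by simpa [star_empty] using h, by simp, by simp⟩
    have hsum : #T ≤ ∑ x ∈ T, f x := by simpa using card_nsmul_le_sum T f 1 hf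
    obtain ⟨x, hx, hdec⟩ := h.exists_insert ha hT hZ (by omega)
    have hxa : x ≠ a := by grind
    obtain ⟨S, hS, hcard, f', hdec', hf', ha'⟩ := ih (T := T.erase x) (Z := insert x Z) hdec
      (by grind) (by grind [Sym2.congr_right])
      (fun y hy => by
        have := hf y (mem_of_mem_erase hy)
        simp [Pi.single_apply, ne_of_mem_erase hy]; omega)
      (fun v hv hv0 => by
        rw [mem_insert, Sym2.congr_right] at hv
        simp only [Pi.sub_apply, Pi.add_apply, Pi.single_apply] at hv0
        grind)
      (by rw [card_erase_of_mem hx]; omega)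
    have hxS : x ∉ S := fun h => by simpa using hS h
    refine ⟨insert x S, by grind, ?_, f', ?_, fun v hv => ?_, ?_⟩
    · have hsdiff : T \ insert x S = T.erase x \ S := by grind
      have := card_insert_le x Z
      rw [hsdiff]
      omega
    · rwa [star_insert, union_insert, ← insert_union]
    · have := hf' v (by grind)
      simp only [Pi.sub_apply, Pi.add_apply, Pi.single_apply] at this
      grind
    · simp only [Pi.sub_apply, Pi.add_apply, Pi.single_apply] at ha'
      grind

end Absorption

section ThreeEdges

variable {V : Type*} [DecidableEq V]

theorem star_val (a : V) (T : Finset V) : (star a T).val = T.val.map fun x => s(a, x) :=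
  image_val_of_injOn fun _ _ _ _ h => Sym2.congr_right.1 h

theorem star_union (a : V) (S T : Finset V) : star a (S ∪ T) = star a S ∪ star a T :=
  image_union ..

theorem Decomposable.add_path {F : Finset (Sym2 V)} {f : V → ℕ} {N : ℕ} (h : Decomposable F f N)
    {p : List V} (hne : p ≠ []) (hp : p.Nodup) (hF : ∀ e ∈ pathEdges p, e ∉ F) :
    Decomposable (F ∪ (pathEdges p).toFinset) f (N + 1) := by
  obtain ⟨L, hL, hE, hends, hN⟩ := h
  refine ⟨p ::ₘ L, isPathFamily_cons.2 ⟨⟨hne, hp⟩, hL⟩, ?_, fun v => ?_, by simpa using hN⟩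
  · have hdisj : Disjoint (pathEdges p).toFinset F :=
      disjoint_left.2 fun e he => hF e (Multiset.mem_toFinset.1 he)
    rw [familyEdges_cons, hE, union_comm, ← disjUnion_eq_union _ _ hdisj, disjUnion_val,
      Multiset.toFinset_val, Multiset.dedup_eq_self.2 (nodup_pathEdges hp)]
  · rw [familyEnds_cons]
    exact (hends v).trans (Nat.le_add_left _ _)

theorem Decomposable.union_star_of_card_le_two {F : Finset (Sym2 V)} {f : V → ℕ} {N : ℕ} {a : V}
    {T : Finset V} (h : Decomposable F f N) (ha : a ∉ T) (hT : ∀ x ∈ T, s(a, x) ∉ F)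
    (hcard : #T ≤ 2) : Decomposable (F ∪ star a T) f (N + 1) := by
  obtain h0 | h1 | h2 : #T = 0 ∨ #T = 1 ∨ #T = 2 := by omega
  · obtain rfl := card_eq_zero.1 h0
    rw [star_empty, union_empty]
    exact h.mono (fun _ => le_rfl) (Nat.le_succ N)
  · obtain ⟨x, rfl⟩ := card_eq_one.1 h1
    have hax : (pathEdges [a, x]).toFinset = star a {x} := rfl
    exact hax ▸ h.add_path (p := [a, x]) (by simp) (by simpa using ha)
      (by simpa [pathEdges] using hT)
  · obtain ⟨x, y, hxy, rfl⟩ := card_eq_two.1 h2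
    have hxay : (pathEdges [x, a, y]).toFinset = star a {x, y} := by
      simp [pathEdges, star, Sym2.eq_swap (a := x)]
    refine hxay ▸ h.add_path (p := [x, a, y]) (by simp) (by grind) ?_
    simpa [pathEdges, Sym2.eq_swap (a := x)] using hT

theorem exists_traverses_cons {L : Multiset (List V)} {a : V} (h : 1 ≤ familyEnds L a) :
    ∃ q, Traverses L (a :: q) := by
  obtain ⟨l, hl, hla⟩ : ∃ l ∈ L, endCount l a ≠ 0 := by
    by_contra! hcon
    have : familyEnds L a = 0 := Multiset.sum_eq_zero (by simpa using hcon)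
    omega
  obtain hhead | hlast : l.head? = some a ∨ l.getLast? = some a := by
    by_contra! hcon
    simp [endCount, hcon.1, hcon.2] at hla
  · obtain ⟨q, rfl⟩ := List.head?_eq_some_iff.1 hhead
    exact ⟨q, Or.inl hl⟩
  · obtain ⟨q, rfl⟩ := List.getLast?_eq_some_iff.1 hlast
    exact ⟨q.reverse, Or.inr (by simpa using hl)⟩

theorem exists_eq_append_of_card_eq_three {α : Type*} {q : List α} (hq : q.Nodup) {U : Finset α}
    (hU : #U = 3) (hUq : ∀ x ∈ U, x ∈ q) :
    ∃ x y z A B, U.val = {x, y, z} ∧ q = A ++ y :: B ∧ x ∈ A ∧ z ∈ B := by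
  classical
  have hval : U.val = (q.filter (· ∈ U) : List α) :=
    (Multiset.Nodup.ext U.nodup (Multiset.coe_nodup.2 (hq.filter _))).2 fun v => by
      simpa using hUq v
  obtain ⟨x, y, z, hxyz⟩ : ∃ x y z, q.filter (· ∈ U) = [x, y, z] := by
    rw [← List.length_eq_three, ← Multiset.coe_card, ← hval]
    exact hU
  obtain ⟨A₁, r, rfl, hx, hr⟩ := List.cons_sublist_iff.1 (hxyz ▸ List.filter_sublist (l := q))
  obtain ⟨A₂, B, rfl, hy, hz⟩ := List.cons_sublist_iff.1 hr
  obtain ⟨A₂, A₃, rfl⟩ := List.append_of_mem hy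
  refine ⟨x, y, z, A₁ ++ A₂, A₃ ++ B, by rw [hval, hxyz]; rfl, by simp, by simp [hx], ?_⟩
  exact List.mem_append_right _ (List.singleton_sublist.1 hz)

/-- Three edges at an end `a` of a path `P` can be added at the cost of one more path and one end
at `a`. Say they lead to `x`, `y`, `z`. If `x` is not on `P`, extend `P` by `ax` and add the path
`y a z`. If `P` runs from `a` through `x`, `y`, `z` in this order, cut it at `y`: the first part is
extended by `za` and the second one by `x a y`. -/
theorem exists_add_three_edges {L : Multiset (List V)} (hL : IsPathFamily L) {a : V}
    (h : 1 ≤ familyEnds L a) {U : Finset V} (ha : a ∉ U) (hU : #U = 3) :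
    ∃ L', IsPathFamily L' ∧ Multiset.card L' = Multiset.card L + 1 ∧
      familyEdges L' = (star a U).val + familyEdges L ∧
      ∀ v, familyEnds L v ≤ familyEnds L' v + if v = a then 1 else 0 := by
  obtain ⟨q, hq⟩ := exists_traverses_cons h
  obtain ⟨L₀, hL₀, hcard, hedges, hends, -⟩ := hq.exists_cons hL
  obtain ⟨⟨-, haq⟩, hL₀⟩ := isPathFamily_cons.1 hL₀
  rw [← hcard, ← hedges, ← hends, star_val]
  by_cases hUq : ∀ x ∈ U, x ∈ q
  · obtain ⟨x, y, z, A, B, hval, rfl, hx, hz⟩ :=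
      exists_eq_append_of_card_eq_three (List.nodup_cons.1 haq).2 hU hUq
    refine ⟨(z :: a :: (A ++ [y])) ::ₘ (x :: a :: y :: B) ::ₘ L₀, ?_, by simp, ?_, fun v => ?_⟩
    · simp only [isPathFamily_cons]
      grind [List.nodup_cons, List.nodup_append]
    · have hsplit : pathEdges (a :: (A ++ y :: B)) =
          pathEdges (a :: (A ++ [y])) + pathEdges (y :: B) :=
        pathEdges_append_cons (a :: A) y B
      simp only [familyEdges_cons, hsplit, pathEdges, Sym2.eq_swap (b := a)]
      simp only [hval, Multiset.insert_eq_cons, ← Multiset.singleton_add, Multiset.map_add,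
        Multiset.map_singleton]
      abel
    · have hlast : (a :: (A ++ y :: B)).getLast? = (y :: B).getLast? := by
        simp [List.getLast?_cons, List.getLast?_append]
      simp only [familyEnds_cons, endCount, hlast, List.head?_cons, List.getLast?_cons_cons,
        Option.some.injEq, @eq_comm V v]
      omega
  · push Not at hUq
    obtain ⟨x, hx, hxq⟩ := hUq
    obtain ⟨y, z, hyz, hyzU⟩ := card_eq_two.1 (show #(U.erase x) = 2 by
      rw [card_erase_of_mem hx, hU])
    have hval : U.val = {x, y, z} := by
      rw [← insert_erase hx, insert_val_of_notMem (by simp), hyzU, insert_val_of_notMem (by simpa)]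
      rfl
    refine ⟨(x :: a :: q) ::ₘ [y, a, z] ::ₘ L₀, ?_, by simp, ?_, fun v => ?_⟩
    · have : y ∈ U.erase x ∧ z ∈ U.erase x := by simp [hyzU]
      simp only [isPathFamily_cons]
      grind [List.nodup_cons]
    · simp only [familyEdges_cons, pathEdges, Sym2.eq_swap (b := a)]
      simp only [hval, Multiset.insert_eq_cons, ← Multiset.singleton_add, Multiset.map_add,
        Multiset.map_singleton]
      abel
    · simp only [familyEnds_cons, endCount, List.head?_cons, List.getLast?_cons_cons,
        Option.some.injEq, @eq_comm V v]
      omega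

theorem Decomposable.union_star_of_card_eq_three {F : Finset (Sym2 V)} {f : V → ℕ} {N : ℕ} {a : V}
    {U : Finset V} (h : Decomposable F f N) (ha : a ∉ U) (hU : ∀ x ∈ U, s(a, x) ∉ F)
    (hcard : #U = 3) (hf : 1 ≤ f a) :
    Decomposable (F ∪ star a U) (f - Pi.single a 1) (N + 1) := by
  obtain ⟨L, hL, hE, hends, hN⟩ := h
  obtain ⟨L', hL', hcard', hE', hends'⟩ :=
    exists_add_three_edges hL (hf.trans (hends a)) ha hcard
  refine ⟨L', hL', ?_, fun v => ?_, by omega⟩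
  · have hdisj : Disjoint (star a U) F := disjoint_left.2 (by grind [star])
    rw [hE', hE, union_comm, ← disjUnion_eq_union _ _ hdisj, disjUnion_val]
  · have := hends v
    have := hends' v
    simp only [Pi.sub_apply, Pi.single_apply]
    omega

theorem Decomposable.union_star {F : Finset (Sym2 V)} {f : V → ℕ} {N : ℕ} {a : V} {T : Finset V}
    (h : Decomposable F f N) (ha : a ∉ T) (hT : ∀ x ∈ T, s(a, x) ∉ F) {k : ℕ} (hcard : #T ≤ 3 * k)
    (hk : k ≤ f a) : Decomposable (F ∪ star a T) (f - Pi.single a k) (N + k) := by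
  induction k generalizing F f N T with
  | zero =>
    obtain rfl : T = ∅ := card_eq_zero.1 (by omega)
    simpa [star_empty] using h
  | succ k ih =>
    by_cases hT2 : #T ≤ 2
    · refine (h.union_star_of_card_le_two ha hT hT2).mono (fun v => ?_) (by omega)
      exact Nat.sub_le _ _
    obtain ⟨U, hUT, hU⟩ := exists_subset_card_eq (show 3 ≤ #T by omega)
    have hdec := h.union_star_of_card_eq_three (fun h => ha (hUT h)) (fun x hx => hT x (hUT hx)) hU
      (by omega)
    have := ih hdec (T := T \ U) (by grind) (by grind [mk_mem_star])
      (by rw [card_sdiff_of_subset hUT]; omega) (by simp; omega)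
    rw [union_assoc, ← star_union, union_sdiff_of_subset hUT] at this
    refine this.mono (fun v => ?_) (by omega)
    simp only [Pi.sub_apply, Pi.single_apply]
    grind

end ThreeEdges

section Potential

variable {V : Type*} [DecidableEq V]

/-- The degree of `v` in the graph with edge set `F`. -/
def degreeIn (F : Finset (Sym2 V)) (v : V) : ℕ := #{e ∈ F | v ∈ e}

theorem degreeIn_union {F F' : Finset (Sym2 V)} (h : Disjoint F F') (v : V) :
    degreeIn (F ∪ F') v = degreeIn F v + degreeIn F' v := by
  rw [degreeIn, filter_union, card_union_of_disjoint (disjoint_filter_filter h)]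
  rfl

theorem degreeIn_sdiff_add {F τ : Finset (Sym2 V)} (h : τ ⊆ F) (v : V) :
    degreeIn (F \ τ) v + degreeIn τ v = degreeIn F v := by
  rw [← degreeIn_union sdiff_disjoint, sdiff_union_of_subset h]

theorem degreeIn_pos_of_mem {F : Finset (Sym2 V)} {u v : V} (h : s(u, v) ∈ F) :
    0 < degreeIn F v :=
  card_pos.2 ⟨s(u, v), mem_filter.2 ⟨h, Sym2.mem_mk_right u v⟩⟩

theorem exists_mem_of_degreeIn_pos {F : Finset (Sym2 V)} {v : V} (h : 0 < degreeIn F v) :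
    ∃ x, s(v, x) ∈ F := by
  obtain ⟨e, he⟩ := card_pos.1 h
  obtain ⟨heF, x, rfl⟩ := mem_filter.1 he
  exact ⟨x, heF⟩

theorem degreeIn_star (a : V) (T : Finset V) (v : V) :
    degreeIn (star a T) v = if v = a then #T else if v ∈ T then 1 else 0 := by
  have hinj : Function.Injective fun x => s(a, x) := fun _ _ h => Sym2.congr_right.1 h
  rw [degreeIn, star, filter_image, card_image_of_injective _ hinj]
  split_ifs with hva hvT
  · simp [hva]
  · rw [card_eq_one]
    exact ⟨v, by ext x; simp [hva]; grind⟩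
  · rw [card_eq_zero]
    ext x
    simp [hva]
    grind

theorem degreeIn_le_of_subset {F F' : Finset (Sym2 V)} (h : F' ⊆ F) (v : V) :
    degreeIn F' v ≤ degreeIn F v :=
  card_le_card (filter_subset_filter _ h)

theorem even_sum_degreeIn [Fintype V] {F : Finset (Sym2 V)} (hF : Loopless F) :
    Even (∑ v, degreeIn F v) := by
  have htwo (e : Sym2 V) (he : e ∈ F) : #{v | v ∈ e} = 2 := by
    rw [← Sym2.card_toFinset_of_not_isDiag e fun hdiag => by
      induction e with
      | _ u v => exact hF u (by simpa [Sym2.mk_isDiag_iff.1 hdiag] using he)]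
    congr 1
    ext v
    simp
  have hsum : ∑ v, degreeIn F v = ∑ e ∈ F, #{v | v ∈ e} :=
    sum_card_bipartiteAbove_eq_sum_card_bipartiteBelow fun v e => v ∈ e
  rw [hsum, sum_congr rfl htwo, sum_const, smul_eq_mul]
  exact even_two.mul_left _

theorem even_countP_pathEdges_add_endCount (v : V) {l : List V} (hne : l ≠ []) (hl : l.Nodup) :
    Even ((pathEdges l).countP (v ∈ ·) + endCount l v) := by
  induction l using pathEdges.induct with
  | case1 => exact absurd rfl hne
  | case2 x => simp [pathEdges, endCount]
  | case3 x y l ih =>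
    have hx := List.nodup_cons.1 hl
    have hxy : x ≠ y := fun h => hx.1 (by simp [h])
    have ih' := ih (List.cons_ne_nil _ _) hx.2
    simp only [pathEdges, Multiset.countP_cons, Sym2.mem_iff, endCount, List.head?_cons,
      List.getLast?_cons_cons, Option.some.injEq, Nat.even_iff] at ih' ⊢
    grind

theorem even_degreeIn_add_familyEnds {L : Multiset (List V)} {F : Finset (Sym2 V)}
    (hL : IsPathFamily L) (hE : familyEdges L = F.val) (v : V) :
    Even (degreeIn F v + familyEnds L v) := by
  have hdeg : degreeIn F v = (familyEdges L).countP (v ∈ ·) := by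
    rw [hE, Multiset.countP_eq_card_filter]
    rfl
  rw [hdeg]
  clear hE hdeg
  induction L using Multiset.induction_on with
  | empty => simp [familyEdges, familyEnds]
  | cons l L ih =>
    obtain ⟨⟨hne, hl⟩, hL⟩ := isPathFamily_cons.1 hL
    rw [familyEdges_cons, familyEnds_cons, Multiset.countP_add, add_add_add_comm]
    exact (even_countP_pathEdges_add_endCount v hne hl).add (ih hL)

theorem Decomposable.exists_even {F : Finset (Sym2 V)} {f : V → ℕ} {N : ℕ}
    (h : Decomposable F f N) :
    ∃ f', Decomposable F f' N ∧ (∀ v, f v ≤ f' v) ∧ ∀ v, Even (degreeIn F v + f' v) := by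
  obtain ⟨L, hL, hE, hends, hN⟩ := h
  exact ⟨familyEnds L, ⟨L, hL, hE, fun _ => le_rfl, hN⟩, hends, even_degreeIn_add_familyEnds hL hE⟩

/-- Six times the number of paths granted to a vertex of degree `d` at which `p` path ends are
demanded. Without demands an odd vertex pays for `1 / 2` path and a nonisolated even one for
`2 / 3`. -/
def vertexWeight (d p : ℕ) : ℕ := 3 * p + if Odd (d + p) then 3 else if d = 0 then 0 else 4

variable [Fintype V]

/-- Six times the number of paths allowed for the graph with edge set `F` when at least `π v` path
ends are demanded at each vertex `v`. -/
def potential (F : Finset (Sym2 V)) (π : V → ℕ) : ℕ := ∑ v, vertexWeight (degreeIn F v) (π v)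

/-- The strengthening of the theorem that is suited to induction: `F` is partitioned by at most
`potential F π / 6` paths satisfying the demands `π`. -/
def WithinPotential (F : Finset (Sym2 V)) (π : V → ℕ) : Prop :=
  ∃ N, 6 * N ≤ potential F π ∧ Decomposable F π N

/-- The induction hypothesis for `F`. -/
def WithinPotentialBelow (F : Finset (Sym2 V)) : Prop :=
  ∀ F' : Finset (Sym2 V), #F' < #F → Loopless F' → ∀ π, WithinPotential F' π

theorem withinPotential_empty (π : V → ℕ) : WithinPotential ∅ π := by
  let L : Multiset (List V) := univ.val.bind fun v => Multiset.replicate ((π v + 1) / 2) [v]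
  have hmem : ∀ l ∈ L, ∃ v, l = [v] := fun l hl => by
    obtain ⟨v, -, hv⟩ := Multiset.mem_bind.1 hl
    exact ⟨v, Multiset.eq_of_mem_replicate hv⟩
  refine ⟨Multiset.card L, ?_, L, fun l hl => ?_, Multiset.sum_eq_zero fun E hE => ?_, fun v => ?_,
    le_rfl⟩
  · have hcard : Multiset.card L = ∑ v, (π v + 1) / 2 := by
      simp only [L, Multiset.card_bind, Function.comp_def, Multiset.card_replicate]
      rfl
    rw [hcard, mul_sum]
    refine sum_le_sum fun v _ => ?_
    simp only [vertexWeight, degreeIn, Nat.odd_iff]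
    grind
  · obtain ⟨v, rfl⟩ := hmem l hl
    simp
  · obtain ⟨l, hl, rfl⟩ := Multiset.mem_map.1 hE
    obtain ⟨v, rfl⟩ := hmem l hl
    rfl
  · have hends : familyEnds L v = ∑ w, (π w + 1) / 2 * endCount [w] v := by
      simp only [familyEnds, L, Multiset.map_bind, Multiset.sum_bind, Multiset.map_replicate,
        Multiset.sum_replicate, smul_eq_mul]
      rfl
    have hv : endCount [v] v = 2 := by simp [endCount]
    have := single_le_sum (f := fun w => (π w + 1) / 2 * endCount [w] v) (fun _ _ => Nat.zero_le _)
      (mem_univ v)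
    simp only [hv] at this
    omega

theorem vertexWeight_sub_add_le {d t p : ℕ} (ht : t ≤ d) {i : ℕ} (hi : i ≤ 1)
    (h : i = 1 → Even (d + p) ∧ 0 < d ∧ Even t) :
    vertexWeight (d - t) (p + i) + (if Even (d + p) ∧ Odd t then 1 else 0) ≤
      vertexWeight d p + 2 * i + if Odd (d + p) ∧ Odd t then 1 else 0 := by
  simp only [vertexWeight, Nat.odd_iff, Nat.even_iff] at h ⊢
  grind

/-- The parity condition makes `f v` positive unless `v` lies outside `P`, has no demand, and has
the same degree parity in `F` and in `τ`. -/
theorem WithinPotentialBelow.exists_decomposable_sdiff {F τ : Finset (Sym2 V)}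
    (hH : WithinPotentialBelow F) (hF : Loopless F) (hτ : τ ⊆ F) (hne : τ.Nonempty) (π : V → ℕ)
    {P : Finset V}
    (hP : ∀ v ∈ P, Even (degreeIn F v + π v) ∧ 0 < degreeIn F v ∧ Even (degreeIn τ v)) :
    ∃ N f, Decomposable (F \ τ) f N ∧ (∀ v, π v + (if v ∈ P then 1 else 0) ≤ f v) ∧
      (∀ v, Even (degreeIn F v + degreeIn τ v + f v)) ∧
      6 * N + #{v | Even (degreeIn F v + π v) ∧ Odd (degreeIn τ v)} ≤
        potential F π + 2 * #P + #{v | Odd (degreeIn F v + π v) ∧ Odd (degreeIn τ v)} := by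
  obtain ⟨N, hN, hdec⟩ := hH (F \ τ) (card_lt_card (sdiff_ssubset hτ hne)) (hF.mono sdiff_subset)
    fun v => π v + if v ∈ P then 1 else 0
  obtain ⟨f, hdec, hf, heven⟩ := hdec.exists_even
  refine ⟨N, f, hdec, hf, fun v => ?_, ?_⟩
  · have := heven v
    have := degreeIn_sdiff_add hτ v
    grind
  · have hsum := sum_le_sum fun v (_ : v ∈ univ) =>
      vertexWeight_sub_add_le (degreeIn_le_of_subset hτ v) (i := if v ∈ P then 1 else 0)
        (by split_ifs <;> simp) fun h => hP v (by simpa using h)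
    simp only [sum_add_distrib, ← mul_sum, sum_boole, filter_univ_mem, Nat.cast_id,
      ← Nat.eq_sub_of_add_eq (degreeIn_sdiff_add hτ _)] at hsum
    exact (Nat.add_le_add_right hN _).trans hsum

end Potential

section PendingStars

variable {V : Type*}

/-- `R` is an orientation of the edges of a subgraph of `F`. -/
structure IsOriented (F : Finset (Sym2 V)) (R : V → Finset V) : Prop where
  mem {c x : V} : x ∈ R c → s(c, x) ∈ F
  asymm {c x : V} : x ∈ R c → c ∉ R x

variable {F : Finset (Sym2 V)} {R : V → Finset V}

theorem IsOriented.anti {R' : V → Finset V} (hR : IsOriented F R) (h : R' ≤ R) :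
    IsOriented F R' :=
  ⟨fun hx => hR.mem (h _ hx), fun hx hc => hR.asymm (h _ hx) (h _ hc)⟩

theorem IsOriented.notMem_self (hR : IsOriented F R) (c : V) : c ∉ R c :=
  fun h => hR.asymm h h

variable [DecidableEq V] [Fintype V] {f : V → ℕ} {N : ℕ}

/-- The edges from each vertex `c` to the vertices of `R c`. In the proof these are edges that have
been removed and are still to be put back, sorted by the vertex `c` that will take care of them. -/
def pending (R : V → Finset V) : Finset (Sym2 V) := univ.biUnion fun c => star c (R c)

theorem mk_mem_pending {u v : V} : s(u, v) ∈ pending R ↔ v ∈ R u ∨ u ∈ R v := by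
  simp only [pending, mem_biUnion, mem_univ, true_and, mk_mem_star]
  grind

theorem IsOriented.pending_subset (hR : IsOriented F R) : pending R ⊆ F := fun e he => by
  induction e with
  | _ u v =>
    rcases mk_mem_pending.1 he with h | h
    · exact hR.mem h
    · exact Sym2.eq_swap ▸ hR.mem h

theorem IsOriented.sdiff_pending_union_star (hR : IsOriented F R) {c : V} {S : Finset V}
    (hS : S ⊆ R c) :
    F \ pending R ∪ star c S = F \ pending (Function.update R c (R c \ S)) := by
  ext e
  induction e with
  | _ u v =>
    have := @hR.mem
    have := @hR.asymm
    have : s(u, v) = s(v, u) := Sym2.eq_swap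
    simp only [mem_union, mem_sdiff, mk_mem_star, mk_mem_pending, Function.update_apply]
    grind

theorem Decomposable.exists_absorb (h : Decomposable (F \ pending R) f N) (hR : IsOriented F R)
    {c : V} {T Z : Finset V} (hT : T ⊆ R c) (hf : ∀ x ∈ T, 1 ≤ f x)
    (hZ : ∀ v, s(c, v) ∈ F \ pending R → f v = 0 → v ∈ Z) :
    ∃ S ⊆ T, 2 * #(T \ S) ≤ #T + #Z ∧ ∃ f',
      Decomposable (F \ pending (Function.update R c (R c \ S))) f' N ∧
      (∀ v, v ∉ S → f v ≤ f' v) ∧ f c + #S ≤ f' c := by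
  obtain ⟨S, hST, hcard, f', hdec, hf', hc⟩ := h.exists_union_star
    (fun hc => hR.notMem_self c (hT hc)) (fun x hx hmem => (mem_sdiff.1 hmem).2
      (mk_mem_pending.2 (Or.inl (hT hx)))) hf hZ
  exact ⟨S, hST, hcard, f', hR.sdiff_pending_union_star (hST.trans hT) ▸ hdec, hf', hc⟩

theorem Decomposable.union_pending (h : Decomposable (F \ pending R) f N) (hR : IsOriented F R)
    (hf : ∀ c, (#(R c) + 2) / 3 ≤ f c) :
    Decomposable F (fun v => f v - (#(R v) + 2) / 3) (N + ∑ c, (#(R c) + 2) / 3) := by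
  suffices H : ∀ C : Finset V, Decomposable (F \ pending fun c => if c ∈ C then ∅ else R c)
      (fun v => f v - if v ∈ C then (#(R v) + 2) / 3 else 0) (N + ∑ c ∈ C, (#(R c) + 2) / 3) by
    have hempty : pending (fun _ => ∅ : V → Finset V) = ∅ :=
      eq_empty_of_forall_notMem fun e => by simp [pending, star_empty]
    simpa [hempty] using H univ
  intro C
  induction C using Finset.induction_on with
  | empty => simpa using h
  | insert a C ha ih =>
    have hR' : IsOriented F fun c => if c ∈ C then ∅ else R c := hR.anti fun c => by
      dsimp only
      split_ifs <;> simp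
    have hstar := ih.union_star (a := a) (T := R a) (k := (#(R a) + 2) / 3) (hR.notMem_self a)
      (fun x hx hmem => by simp_all [mk_mem_pending]) (by omega) (by simpa [ha] using hf a)
    rw [hR'.sdiff_pending_union_star (by simp [ha])] at hstar
    have hupd : (Function.update (fun c => if c ∈ C then ∅ else R c) a
        ((if a ∈ C then ∅ else R a) \ R a)) = fun c => if c ∈ insert a C then ∅ else R c := by
      funext c
      by_cases hc : c = a <;> simp [hc, ha]
    rw [hupd] at hstar
    refine hstar.mono (fun v => ?_) (by rw [sum_insert ha]; omega)
    simp only [Pi.sub_apply, Pi.single_apply]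
    grind

/-- The conditions under which the centres `c ∈ l` can, in this order, absorb half of the edges to
`T c` each. The vertices of `Z c` are those that might not be an end of any path at the time when
`c` absorbs, but are then joined to `c` by an edge. -/
structure CanAbsorb (F : Finset (Sym2 V)) (T Z : V → Finset V) (l : List V) (R : V → Finset V)
    (f : V → ℕ) : Prop where
  nodup : l.Nodup
  subset {c : V} : c ∈ l → T c ⊆ R c
  notMem {c x : V} : c ∈ l → x ∈ T c → x ∉ l
  one_le {c x : V} : c ∈ l → x ∈ T c → 1 ≤ f x
  lt {c : V} : c ∈ l → (#(T c) + #(Z c)) / 2 < #(T c) + f c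
  zero {c v : V} : c ∈ l → v ∉ l → s(c, v) ∈ F \ pending R → f v = 0 → v ∈ Z c
  pairwise : l.Pairwise fun c c' => Disjoint (T c) (T c') ∧
    (f c' = 0 → s(c, c') ∈ F \ pending R → c' ∈ Z c) ∧
    ∀ v ∈ T c, s(c', v) ∈ F → v ∈ Z c'

variable {T Z : V → Finset V} {l : List V}

theorem CanAbsorb.exists_absorb {c : V} (h : CanAbsorb F T Z (c :: l) R f) (hF : Loopless F)
    (hR : IsOriented F R) (hdec : Decomposable (F \ pending R) f N) :
    ∃ S ⊆ T c, 2 * #(T c \ S) ≤ #(T c) + #(Z c) ∧ ∃ f',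
      Decomposable (F \ pending (Function.update R c (R c \ S))) f' N ∧
      (∀ v, v ∉ S → f v ≤ f' v) ∧ f c + #S ≤ f' c := by
  have hc : c ∈ c :: l := List.mem_cons_self
  refine hdec.exists_absorb hR (h.subset hc) (fun x => h.one_le hc) fun v hv hv0 => ?_
  by_cases hvl : v ∈ l
  · exact ((List.pairwise_cons.1 h.pairwise).1 v hvl).2.1 hv0 hv
  · refine h.zero hc (fun hvcl => ?_) hv hv0
    obtain rfl : v = c := (List.mem_cons.1 hvcl).resolve_right hvl
    exact hF v (mem_sdiff.1 hv).1

theorem CanAbsorb.of_cons {c : V} (h : CanAbsorb F T Z (c :: l) R f) {S : Finset V} {f' : V → ℕ}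
    (hS : S ⊆ T c) (hf : ∀ v, v ∉ S → f v ≤ f' v) (hc : 0 < f' c) :
    CanAbsorb F T Z l (Function.update R c (R c \ S)) f' := by
  obtain ⟨hcl, hl⟩ := List.nodup_cons.1 h.nodup
  obtain ⟨hpair_c, hpair⟩ := List.pairwise_cons.1 h.pairwise
  have hne {c' : V} (hc' : c' ∈ l) : c' ≠ c := ne_of_mem_of_not_mem hc' hcl
  have hmem {c' : V} (hc' : c' ∈ l) : c' ∈ c :: l := List.mem_cons_of_mem c hc'
  have hfl {c' : V} (hc' : c' ∈ l) : f c' ≤ f' c' :=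
    hf c' fun hcS => h.notMem List.mem_cons_self (hS hcS) (hmem hc')
  refine ⟨hl, fun hc' => ?_, fun hc' hx hxl => h.notMem (hmem hc') hx (hmem hxl),
    fun {c' x} hc' hx => ?_, fun hc' => ?_, fun {c' v} hc' hvl hv hv0 => ?_, ?_⟩
  · rw [Function.update_of_ne (hne hc')]
    exact h.subset (hmem hc')
  · exact (h.one_le (hmem hc') hx).trans
      (hf x fun hxS => disjoint_left.1 (hpair_c c' hc').1 (hS hxS) hx)
  · exact (h.lt (hmem hc')).trans_le (Nat.add_le_add_left (hfl hc') _)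
  · by_cases hvS : v ∈ S
    · exact (hpair_c c' hc').2.2 v (hS hvS) (mem_sdiff.1 hv).1
    · have hvc : v ≠ c := by
        rintro rfl
        omega
      simp only [mem_sdiff, mk_mem_pending, Function.update_of_ne hvc,
        Function.update_of_ne (hne hc')] at hv
      exact h.zero (hmem hc') (by simp [hvc, hvl]) (by simpa [mk_mem_pending] using hv)
        (Nat.eq_zero_of_le_zero (hv0 ▸ hf v hvS))
  · refine hpair.imp_of_mem fun hc' hc'' hp => ⟨hp.1, fun h0 hcc => ?_, hp.2.2⟩
    refine hp.2.1 (Nat.eq_zero_of_le_zero (h0 ▸ hfl hc'')) ?_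
    simpa only [mem_sdiff, mk_mem_pending, Function.update_of_ne (hne hc'),
      Function.update_of_ne (hne hc'')] using hcc

theorem CanAbsorb.exists_decomposable (h : CanAbsorb F T Z l R f) (hF : Loopless F)
    (hR : IsOriented F R) (hdec : Decomposable (F \ pending R) f N) :
    ∃ R' f', Decomposable (F \ pending R') f' N ∧ R' ≤ R ∧ (∀ c, c ∉ l → R' c = R c) ∧
      (∀ c ∈ l, R c \ T c ⊆ R' c ∧ 2 * #(R' c) + #(T c) ≤ 2 * #(R c) + #(Z c) ∧
        f c + #(R c) ≤ f' c + #(R' c)) ∧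
      ∀ v, (∀ c ∈ l, v ∈ T c → v ∈ R' c) → f v ≤ f' v := by
  induction l generalizing R f with
  | nil => exact ⟨R, f, hdec, le_rfl, by simp, by simp, by simp⟩
  | cons c l ih =>
    have hcmem : c ∈ c :: l := List.mem_cons_self
    have hcl : c ∉ l := (List.nodup_cons.1 h.nodup).1
    obtain ⟨S, hS, hcard, f₁, hdec₁, hf₁, hc⟩ := h.exists_absorb hF hR hdec
    have hST := card_sdiff_add_card_eq_card hS
    have hSR := card_sdiff_add_card_eq_card (hS.trans (h.subset hcmem))
    have hle : Function.update R c (R c \ S) ≤ R := by simp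
    obtain ⟨R', f', hdec', hR', hoff, hon, hf'⟩ :=
      ih (h.of_cons hS hf₁ (by have := h.lt hcmem; omega)) (hR.anti hle) hdec₁
    have hR'c : R' c = R c \ S := by simpa using hoff c hcl
    refine ⟨R', f', hdec', hR'.trans hle, fun v hv => ?_, ?_, fun v hv => ?_⟩
    · rw [hoff v (by grind), Function.update_of_ne (by grind)]
    · rw [List.forall_mem_cons, hR'c]
      refine ⟨⟨sdiff_subset_sdiff le_rfl hS, by omega, ?_⟩, fun c' hc' => ?_⟩
      · have := hf' c fun c' hc' hcT =>
          absurd hcmem (h.notMem (List.mem_cons_of_mem c hc') hcT)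
        omega
      · have hon' := hon c' hc'
        rw [Function.update_of_ne (ne_of_mem_of_not_mem hc' hcl)] at hon'
        exact ⟨hon'.1, hon'.2.1, (Nat.add_le_add_right (hf₁ c' fun hcS =>
          h.notMem hcmem (hS hcS) (List.mem_cons_of_mem c hc')) _).trans hon'.2.2⟩
    · exact (hf₁ v (by grind)).trans (hf' v (by grind))

end PendingStars

section DangerousVertices

variable {V : Type*} [DecidableEq V] [Fintype V] {F : Finset (Sym2 V)} {π : V → ℕ}

/-- The vertices at which a decomposition with the demands `π` might have no path end: the demand
is zero and the degree is even and positive. -/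
def dangerous (F : Finset (Sym2 V)) (π : V → ℕ) : Finset V :=
  {v | π v = 0 ∧ Even (degreeIn F v) ∧ 0 < degreeIn F v}

/-- The dangerous neighbours of `v`. -/
def dangerousNbrs (F : Finset (Sym2 V)) (π : V → ℕ) (v : V) : Finset V :=
  {x ∈ dangerous F π | s(v, x) ∈ F}

theorem mem_dangerous {v : V} :
    v ∈ dangerous F π ↔ π v = 0 ∧ Even (degreeIn F v) ∧ 0 < degreeIn F v := by
  simp [dangerous]

theorem mem_dangerousNbrs {v x : V} :
    x ∈ dangerousNbrs F π v ↔ x ∈ dangerous F π ∧ s(v, x) ∈ F := by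
  simp [dangerousNbrs]

theorem Loopless.notMem_dangerousNbrs (hF : Loopless F) (π : V → ℕ) (v : V) :
    v ∉ dangerousNbrs F π v :=
  fun h => hF v (mem_dangerousNbrs.1 h).2

theorem mem_dangerousNbrs_symm {v x : V} (hv : v ∈ dangerous F π) (h : x ∈ dangerousNbrs F π v) :
    v ∈ dangerousNbrs F π x :=
  mem_dangerousNbrs.2 ⟨hv, Sym2.eq_swap ▸ (mem_dangerousNbrs.1 h).2⟩

theorem degreeIn_pending {R : V → Finset V} (hR : IsOriented F R) (v : V) :
    degreeIn (pending R) v = #(R v) + #{c | v ∈ R c} := by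
  have hdisj : Disjoint (R v) ({c | v ∈ R c} : Finset V) :=
    disjoint_left.2 fun c hc hv => hR.asymm hc (by simpa using hv)
  have hfilter : {e ∈ pending R | v ∈ e} = star v (R v ∪ ({c | v ∈ R c} : Finset V)) := by
    ext e
    induction e with
    | _ x y =>
      simp only [mem_filter, mk_mem_pending, Sym2.mem_iff, mk_mem_star, mem_union, mem_univ,
        true_and]
      grind
  rw [degreeIn, hfilter, ← card_union_of_disjoint hdisj, star,
    card_image_of_injective _ fun _ _ h => Sym2.congr_right.1 h]

theorem WithinPotentialBelow.exists_decomposable_sdiff_pending (hH : WithinPotentialBelow F)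
    (hF : Loopless F) {R : V → Finset V} (hR : IsOriented F R) (hne : ∃ c, (R c).Nonempty)
    (hdang : ∀ c x, x ∈ R c → c ∈ dangerous F π ∧ x ∈ dangerous F π) {P : Finset V}
    (hP : P ⊆ dangerous F π) (hPeven : ∀ v ∈ P, Even (degreeIn (pending R) v)) :
    ∃ N f, Decomposable (F \ pending R) f N ∧ π ≤ f ∧
      (∀ v, 0 < degreeIn F v → f v = 0 →
        v ∈ dangerous F π ∧ v ∉ P ∧ Even (degreeIn (pending R) v)) ∧
      6 * N + #{v | Odd (degreeIn (pending R) v)} ≤ potential F π + 2 * #P := by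
  have hodd (v : V) (hv : v ∉ dangerous F π) : degreeIn (pending R) v = 0 := by
    rw [degreeIn_pending hR, Nat.add_eq_zero_iff, card_eq_zero, card_eq_zero,
      eq_empty_iff_forall_notMem, filter_eq_empty_iff]
    exact ⟨fun x hx => hv (hdang v x hx).1, fun c _ hc => hv (hdang c v hc).2⟩
  obtain ⟨c, x, hx⟩ := hne
  obtain ⟨N, f, hdec, hf, heven, hN⟩ := hH.exists_decomposable_sdiff hF hR.pending_subset
    ⟨s(c, x), mk_mem_pending.2 (Or.inl hx)⟩ π fun v hv => by
      have := mem_dangerous.1 (hP hv)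
      exact ⟨by simpa [this.1] using this.2.1, this.2.2, hPeven v hv⟩
  refine ⟨N, f, hdec, fun v => (Nat.le_add_right _ _).trans (hf v), fun v hpos h0 => ?_, ?_⟩
  · have hfv := hf v
    have hevenv := heven v
    have := hodd v
    rw [mem_dangerous] at this ⊢
    grind
  · have hleft : #{v | Even (degreeIn F v + π v) ∧ Odd (degreeIn (pending R) v)} =
        #{v | Odd (degreeIn (pending R) v)} := by
      refine congrArg card (filter_congr fun v _ => ?_)
      have := hodd v
      rw [mem_dangerous] at this
      grind
    have hright : #{v | Odd (degreeIn F v + π v) ∧ Odd (degreeIn (pending R) v)} = 0 := by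
      refine card_eq_zero.2 (filter_eq_empty_iff.2 fun v _ => ?_)
      have := hodd v
      rw [mem_dangerous] at this
      grind
    omega

/-- Disjoint stars with centres `l` and leaf sets `R c`, whose edges join dangerous vertices, and a
set `P` of further dangerous vertices. -/
structure IsStarForest (F : Finset (Sym2 V)) (π : V → ℕ) (l : List V) (R : V → Finset V)
    (P : Finset V) : Prop where
  nodup : l.Nodup
  centre {c : V} : c ∈ l → c ∈ dangerous F π
  off {c : V} : c ∉ l → R c = ∅
  nbr {c x : V} : x ∈ R c → x ∈ dangerousNbrs F π c
  notMem {c x : V} : x ∈ R c → x ∉ l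
  disjoint {c c' x : V} : x ∈ R c → x ∈ R c' → c = c'
  extra {v : V} : v ∈ P → v ∈ dangerous F π ∧ v ∉ l ∧ ∀ c, v ∉ R c

namespace IsStarForest

variable {l : List V} {R : V → Finset V} {P : Finset V}

theorem mem_of_mem (h : IsStarForest F π l R P) {c x : V} (hx : x ∈ R c) : c ∈ l := by
  by_contra hc
  simp [h.off hc] at hx

theorem isOriented (h : IsStarForest F π l R P) : IsOriented F R :=
  ⟨fun hx => (mem_dangerousNbrs.1 (h.nbr hx)).2, fun hx hc => h.notMem hc (h.mem_of_mem hx)⟩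

theorem degreeIn_centre (h : IsStarForest F π l R P) {c : V} (hc : c ∈ l) :
    degreeIn (pending R) c = #(R c) := by
  rw [degreeIn_pending h.isOriented, Nat.add_eq_left, card_eq_zero, filter_eq_empty_iff]
  exact fun c' _ hc' => h.notMem hc' hc

theorem degreeIn_leaf (h : IsStarForest F π l R P) {c x : V} (hx : x ∈ R c) :
    degreeIn (pending R) x = 1 := by
  have hcentre : ({c | x ∈ R c} : Finset V) = {c} := by
    ext c'
    simp only [mem_filter, mem_univ, true_and, mem_singleton]
    exact ⟨fun hx' => h.disjoint hx' hx, fun hc => hc ▸ hx⟩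
  rw [degreeIn_pending h.isOriented, h.off (h.notMem hx), hcentre, card_empty, card_singleton]

theorem degreeIn_eq_zero (h : IsStarForest F π l R P) {v : V} (hv : v ∉ l) (hR : ∀ c, v ∉ R c) :
    degreeIn (pending R) v = 0 := by
  simp [degreeIn_pending h.isOriented, h.off hv, hR]

theorem card_odd (h : IsStarForest F π l R P) :
    #{v | Odd (degreeIn (pending R) v)} = (l.map fun c => #(R c) + #(R c) % 2).sum := by
  have hunion : ({v | Odd (degreeIn (pending R) v)} : Finset V) =
      l.toFinset.biUnion R ∪ {c ∈ l.toFinset | Odd #(R c)} := by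
    ext v
    simp only [mem_filter, mem_univ, true_and, mem_union, mem_biUnion, List.mem_toFinset]
    by_cases hv : v ∈ l
    · have hleaf : ¬ ∃ c ∈ l, v ∈ R c := fun ⟨c, _, hc⟩ => h.notMem hc hv
      simp [h.degreeIn_centre hv, hv, hleaf]
    · by_cases hleaf : ∃ c, v ∈ R c
      · obtain ⟨c, hc⟩ := hleaf
        simp only [h.degreeIn_leaf hc, odd_one, true_iff]
        exact Or.inl ⟨c, h.mem_of_mem hc, hc⟩
      · simp_all [h.degreeIn_eq_zero hv]
  have hdisj : Disjoint (l.toFinset.biUnion R) {c ∈ l.toFinset | Odd #(R c)} := by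
    rw [disjoint_biUnion_left]
    exact fun c _ => disjoint_left.2 fun v hv hvl =>
      h.notMem hv (List.mem_toFinset.1 (mem_filter.1 hvl).1)
  rw [hunion, card_union_of_disjoint hdisj, card_biUnion fun c _ c' _ hne =>
    disjoint_left.2 fun x hx hx' => hne (h.disjoint hx hx'), card_filter, ← sum_add_distrib,
    List.sum_toFinset _ h.nodup]
  congr! 3 with c
  split_ifs with hc <;> grind

end IsStarForest

end DangerousVertices

section StarForests

variable {V : Type*} [DecidableEq V] [Fintype V] {F : Finset (Sym2 V)} {π : V → ℕ}

/-- The number of further paths that restore a star of `r + t` edges after half of `t` of them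
have been absorbed, `z` being the number of vertices next to its centre at which no path might
end. -/
def starCost (r t z : ℕ) : ℕ :=
  (r + (t + z) / 2 + 2) / 3

theorem Decomposable.withinPotential_of_sdiff_pending {R : V → Finset V} {l : List V} {f k : V → ℕ}
    {N : ℕ} (h : Decomposable (F \ pending R) f N) (hR : IsOriented F R) (hl : l.Nodup)
    (hdang : ∀ c ∈ l, c ∈ dangerous F π) (hoff : ∀ c, c ∉ l → R c = ∅)
    (hπ : ∀ v, v ∉ l → π v ≤ f v) (hk : ∀ c ∈ l, #(R c) ≤ 3 * k c)
    (hf : ∀ c ∈ l, (#(R c) + 2) / 3 ≤ f c) (hN : 6 * (N + (l.map k).sum) ≤ potential F π) :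
    WithinPotential F π := by
  have hsum : ∑ c, (#(R c) + 2) / 3 ≤ (l.map k).sum := by
    rw [← List.sum_toFinset _ hl, ← sum_subset (subset_univ l.toFinset) fun c _ hc => by
      simp [hoff c (List.mem_toFinset.not.1 hc)]]
    refine sum_le_sum fun c hc => ?_
    have := hk c (List.mem_toFinset.1 hc)
    omega
  refine ⟨_, by omega, (h.union_pending hR fun c => ?_).mono (fun v => ?_) le_rfl⟩
  · by_cases hc : c ∈ l
    · exact hf c hc
    · simp [hoff c hc]
  · by_cases hv : v ∈ l
    · simp [(mem_dangerous.1 (hdang v hv)).1]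
    · simpa [hoff v hv] using hπ v hv

namespace IsStarForest

variable {l : List V} {R T Z : V → Finset V} {P : Finset V}

theorem exists_decomposable (h : IsStarForest F π l R P) (hH : WithinPotentialBelow F)
    (hF : Loopless F) (hne : ∃ c, (R c).Nonempty) :
    ∃ N f, Decomposable (F \ pending R) f N ∧ π ≤ f ∧
      (∀ v, 0 < degreeIn F v → f v = 0 →
        v ∈ dangerous F π ∧ v ∉ P ∧ (∀ c, v ∉ R c) ∧ Even #(R v)) ∧
      6 * N + (l.map fun c => #(R c) + #(R c) % 2).sum ≤ potential F π + 2 * #P := by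
  obtain ⟨N, f, hdec, hπf, hf, hN⟩ := hH.exists_decomposable_sdiff_pending hF h.isOriented hne
    (fun c x hx => ⟨h.centre (h.mem_of_mem hx), (mem_dangerousNbrs.1 (h.nbr hx)).1⟩)
    (fun v hv => (h.extra hv).1) fun v hv => by
      simp [h.degreeIn_eq_zero (h.extra hv).2.1 (h.extra hv).2.2]
  refine ⟨N, f, hdec, hπf, fun v hv h0 => ?_, h.card_odd ▸ hN⟩
  obtain ⟨hdang, hvP, heven⟩ := hf v hv h0
  have hleaf (c : V) : v ∉ R c := fun hc => by simp [h.degreeIn_leaf hc] at heven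
  refine ⟨hdang, hvP, hleaf, ?_⟩
  by_cases hvl : v ∈ l
  · rwa [h.degreeIn_centre hvl] at heven
  · simp [h.off hvl]

theorem canAbsorb (h : IsStarForest F π l R P) (hTR : ∀ c ∈ l, T c ⊆ R c)
    (hlt : ∀ c ∈ l, (#(T c) + #(Z c)) / 2 < #(T c) + #(R c) % 2)
    (hzero : ∀ c ∈ l, ∀ v ∈ dangerousNbrs F π c, v ∉ l → v ∈ P ∨ v ∈ Z c ∨ ∃ c', v ∈ R c')
    (hpair : l.Pairwise fun c c' => (Even #(R c') → c' ∈ Z c) ∧ ∀ v ∈ T c, s(c', v) ∈ F → v ∈ Z c')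
    {f : V → ℕ} (hf : ∀ v, 0 < degreeIn F v → f v = 0 →
      v ∈ dangerous F π ∧ v ∉ P ∧ (∀ c, v ∉ R c) ∧ Even #(R v)) :
    CanAbsorb F T Z l R f := by
  have hcentre {c : V} (hc : c ∈ l) : f c = 0 → Even #(R c) := fun h0 =>
    (hf c (mem_dangerous.1 (h.centre hc)).2.2 h0).2.2.2
  have hleaf {c x : V} (hx : x ∈ R c) : f x ≠ 0 := fun h0 =>
    (hf x (mem_dangerous.1 (mem_dangerousNbrs.1 (h.nbr hx)).1).2.2 h0).2.2.1 c hx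
  refine ⟨h.nodup, hTR _, fun hc hx => h.notMem (hTR _ hc hx), fun hc hx =>
    Nat.one_le_iff_ne_zero.2 (hleaf (hTR _ hc hx)), fun hc => ?_, fun {c v} hc hv he h0 => ?_, ?_⟩
  · have := hlt _ hc
    have := hcentre hc
    grind
  · have hcv := (mem_sdiff.1 he).1
    obtain ⟨hvE, hvP, -⟩ := hf v (degreeIn_pos_of_mem hcv) h0
    rcases hzero c hc v (mem_dangerousNbrs.2 ⟨hvE, hcv⟩) hv with hv | hv | ⟨c', hv⟩
    · exact absurd hv hvP
    · exact hv
    · exact absurd h0 (hleaf hv)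
  · refine (h.nodup.and hpair).imp_of_mem fun {c c'} hc hc' hp => ⟨?_, fun h0 => ?_, hp.2.2⟩
    · exact disjoint_left.2 fun x hx hx' => hp.1 (h.disjoint (hTR c hc hx) (hTR c' hc' hx'))
    · exact fun _ => hp.2.1 (hcentre hc' h0)

theorem withinPotential (h : IsStarForest F π l R P) (hH : WithinPotentialBelow F)
    (hF : Loopless F) (hne : ∃ c, (R c).Nonempty) (hTR : ∀ c ∈ l, T c ⊆ R c)
    (hcount : ∀ c ∈ l, max 1 (starCost #(R c \ T c) #(T c) #(Z c)) + (#(T c) + #(Z c)) / 2 ≤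
      #(T c) + #(R c) % 2)
    (hzero : ∀ c ∈ l, ∀ v ∈ dangerousNbrs F π c, v ∉ l → v ∈ P ∨ v ∈ Z c ∨ ∃ c', v ∈ R c')
    (hpair : l.Pairwise fun c c' => (Even #(R c') → c' ∈ Z c) ∧ ∀ v ∈ T c, s(c', v) ∈ F → v ∈ Z c')
    (hbudget : 6 * (l.map fun c => starCost #(R c \ T c) #(T c) #(Z c)).sum + 2 * #P ≤
      (l.map fun c => #(R c) + #(R c) % 2).sum) :
    WithinPotential F π := by
  obtain ⟨N, f, hdec, hπf, hf, hN⟩ := h.exists_decomposable hH hF hne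
  have habs : CanAbsorb F T Z l R f := h.canAbsorb hTR
    (fun c hc => by have := hcount c hc; omega) hzero hpair hf
  obtain ⟨R', f', hdec', hR', hoff, hon, hf'⟩ := habs.exists_decomposable hF h.isOriented hdec
  have hcost {c : V} (hc : c ∈ l) :
      (#(R' c) + 2) / 3 ≤ starCost #(R c \ T c) #(T c) #(Z c) ∧ (#(R' c) + 2) / 3 ≤ f' c := by
    have := hcount c hc
    obtain ⟨-, hcard, hfc⟩ := hon c hc
    have := card_sdiff_add_card_eq_card (hTR c hc)
    have hfodd : #(R c) % 2 ≤ f c := by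
      have := hf c (mem_dangerous.1 (h.centre hc)).2.2
      grind
    unfold starCost at *
    omega
  refine hdec'.withinPotential_of_sdiff_pending (l := l) (h.isOriented.anti hR') h.nodup
    (fun _ => h.centre) (fun c hc => (hoff c hc).trans (h.off hc)) (fun v _ => ?_)
    (fun c hc => by have := (hcost hc).1; omega) (fun c hc => (hcost hc).2)
    (by omega : 6 * (N + (l.map fun c => starCost #(R c \ T c) #(T c) #(Z c)).sum) ≤ _)
  by_cases hleaf : ∃ c, v ∈ R c
  · obtain ⟨c, hc⟩ := hleaf
    simp [(mem_dangerous.1 (mem_dangerousNbrs.1 (h.nbr hc)).1).1]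
  · exact (hπf v).trans (hf' v fun c hc hvT => absurd ⟨c, hTR c hc hvT⟩ hleaf)

end IsStarForest

end StarForests

section NonadjacentDangerousVertices

variable {V : Type*} [DecidableEq V] {F : Finset (Sym2 V)}

theorem Decomposable.of_sdiff_star {f h : V → ℕ} {N : ℕ} {x : V} {R : Finset V}
    (hdec : Decomposable (F \ star x R) f N) (hF : Loopless F) (hR : ∀ r ∈ R, s(x, r) ∈ F)
    (hx : h x + #R ≤ f x) (hf : ∀ v, v ≠ x → h v ≤ f v)
    (hpos : ∀ r ∈ R, ∀ v, v ≠ x → s(r, v) ∈ F → 1 ≤ f v) : Decomposable F h N := by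
  induction R using Finset.induction_on generalizing f with
  | empty =>
    refine (show Decomposable F f N by simpa [star_empty] using hdec).mono (fun v => ?_) le_rfl
    by_cases hv : v = x
    · simpa [hv] using hx
    · exact hf v hv
  | insert r R hr ih =>
    rw [card_insert_of_notMem hr] at hx
    have hxr : s(x, r) ∈ F := hR r (mem_insert_self r R)
    have hrx : r ≠ x := fun h => hF x (h ▸ hxr)
    obtain ⟨y, hy, hdec'⟩ := hdec.exists_insert (a := r) (T := {x}) (Z := ∅) (by simpa using hrx)
      (by simp [Sym2.eq_swap, mk_mem_star]) (fun v hv h0 => by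
        rw [mem_sdiff, mk_mem_star] at hv
        have := hpos r (mem_insert_self r R) v
        grind) (by simp; omega)
    obtain rfl : y = x := mem_singleton.1 hy
    have hset : insert s(r, y) (F \ star y (insert r R)) = F \ star y R := by
      rw [Sym2.eq_swap, star_insert]
      have : s(y, r) ∉ star y R := by
        rw [mk_mem_star]
        grind
      grind
    rw [hset] at hdec'
    refine ih hdec' (fun r' hr' => hR r' (mem_insert_of_mem hr')) ?_ (fun v hv => ?_)
      fun r' hr' v hv he => ?_
    · simp [hrx.symm]
      omega
    · simpa [hv] using (hf v hv).trans (Nat.le_add_right _ _)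
    · simpa [hv] using (hpos r' (mem_insert_of_mem hr') v hv he).trans (Nat.le_add_right _ _)

variable [Fintype V] {π : V → ℕ}

theorem WithinPotentialBelow.exists_decomposable_sdiff_star (hH : WithinPotentialBelow F)
    (hF : Loopless F) {x : V} {A : Finset V} (hne : A.Nonempty) (hA : ∀ v ∈ A, s(x, v) ∈ F)
    (heven : ∀ v ∈ A, Even (degreeIn F v + π v)) :
    ∃ N f, 6 * N ≤ potential F π ∧ Decomposable (F \ star x A) f N ∧ π ≤ f ∧
      (∀ v ∈ A, π v + 1 ≤ f v) ∧
      ∀ v, 0 < degreeIn F v → v ∉ dangerous F π → v ∉ A → v ≠ x → 1 ≤ f v := by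
  have hxA : x ∉ A := fun h => hF x (hA x h)
  have hsub : star x A ⊆ F := fun e he => by
    obtain ⟨v, hv, rfl⟩ := mem_image.1 he
    exact hA v hv
  obtain ⟨N, f, hdec, hf, hpar, hN⟩ := hH.exists_decomposable_sdiff hF hsub
    (hne.image _) π (P := ∅) (by simp)
  replace hf (v : V) : π v ≤ f v := by simpa using hf v
  simp only [degreeIn_star] at hpar hN
  refine ⟨N, f, ?_, hdec, hf, fun v hv => ?_, fun v hv hvE hvA hvx => ?_⟩
  · have hgain : A ⊆ ({v | Even (degreeIn F v + π v) ∧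
        Odd (if v = x then #A else if v ∈ A then 1 else 0)} : Finset V) := fun v hv => by
      simp [heven v hv, hv, ne_of_mem_of_not_mem hv hxA]
    have hloss : ({v | Odd (degreeIn F v + π v) ∧
        Odd (if v = x then #A else if v ∈ A then 1 else 0)} : Finset V) ⊆ {x} := fun v hv => by
      have := heven v
      grind
    have := card_le_card hgain
    have := (card_le_card hloss).trans_eq (card_singleton x)
    have := hne.card_pos
    rw [card_empty] at hN
    omega
  · have := hf v
    have := hpar v
    have := heven v hv
    grind
  · have := hf v
    have := hpar v
    rw [mem_dangerous] at hvE
    grind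

theorem withinPotential_of_dangerousNbrs_eq_empty (hH : WithinPotentialBelow F) (hF : Loopless F)
    {a : V} (ha : a ∈ dangerous F π) (hind : ∀ v ∈ dangerous F π, dangerousNbrs F π v = ∅) :
    WithinPotential F π := by
  obtain ⟨x, hx⟩ := exists_mem_of_degreeIn_pos (mem_dangerous.1 ha).2.2
  set A := dangerousNbrs F π x
  have hxA : x ∉ A := hF.notMem_dangerousNbrs π x
  have hmemA {v : V} (hv : v ∈ A) := mem_dangerousNbrs.1 hv
  have hnone {v w : V} (hv : v ∈ dangerous F π) (hw : s(v, w) ∈ F) : w ∉ dangerous F π :=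
    fun hwE => notMem_empty w (hind v hv ▸ mem_dangerousNbrs.2 ⟨hwE, hw⟩)
  obtain ⟨N, f, hN, hdec, hπf, hfA, hf⟩ := hH.exists_decomposable_sdiff_star hF (π := π) (x := x)
    (A := A) ⟨a, mem_dangerousNbrs.2 ⟨ha, Sym2.eq_swap ▸ hx⟩⟩ (fun v hv => (hmemA hv).2)
    fun v hv => by
      have := mem_dangerous.1 (hmemA hv).1
      simp [this.1, this.2.1]
  have hpos {v w : V} (hw : s(v, w) ∈ F) (hwE : w ∉ dangerous F π) (hwx : w ≠ x) : 1 ≤ f w :=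
    hf w (degreeIn_pos_of_mem hw) hwE (fun h => hwE (hmemA h).1) hwx
  obtain ⟨S, hS, hcard, f', hdec', hf', hx'⟩ := hdec.exists_union_star (Z := ∅) hxA
    (by simp +contextual [mk_mem_star]) (fun v hv => (Nat.le_add_left _ _).trans (hfA v hv))
    fun v hv h0 => by
      obtain ⟨hvF, hv⟩ := mem_sdiff.1 hv
      have hvE : v ∉ dangerous F π := fun h =>
        hv (mk_mem_star.2 (Or.inl ⟨rfl, mem_dangerousNbrs.2 ⟨h, hvF⟩⟩))
      have := hpos hvF hvE fun h => hF x (h ▸ hvF)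
      omega
  have hset : F \ star x A ∪ star x S = F \ star x (A \ S) := by
    ext e
    induction e with
    | _ u v =>
      have := @hmemA u
      have := @hmemA v
      simp only [mem_union, mem_sdiff, mk_mem_star]
      grind
  have hAS := card_sdiff_add_card_eq_card hS
  rw [hset] at hdec'
  refine ⟨N, hN, hdec'.of_sdiff_star hF (fun r hr => (hmemA (mem_sdiff.1 hr).1).2) ?_
    (fun v _ => ?_) fun r hr v hvx he => ?_⟩
  · have : π x ≤ f x := hπf x
    simp only [card_empty] at hcard
    omega
  · by_cases hvS : v ∈ S
    · simp [(mem_dangerous.1 (hmemA (hS hvS)).1).1]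
    · exact (hπf v).trans (hf' v hvS)
  · have hvE := hnone (hmemA (mem_sdiff.1 hr).1).1 he
    exact (hpos he hvE hvx).trans (hf' v fun h => hvE (hmemA (hS h)).1)

theorem withinPotential_of_even (hH : WithinPotentialBelow F) (hF : Loopless F)
    (hE : dangerous F π = ∅) {a : V} (ha : 0 < degreeIn F a) (heven : Even (degreeIn F a + π a)) :
    WithinPotential F π := by
  obtain ⟨x, hx⟩ := exists_mem_of_degreeIn_pos ha
  have hstar : star x {a} = star a {x} := by simp [star, Sym2.eq_swap]
  obtain ⟨N, f, hN, hdec, hπf, hfa, hf⟩ := hH.exists_decomposable_sdiff_star hF (x := x)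
    (singleton_nonempty a) (by simpa [Sym2.eq_swap] using hx) (by simpa using heven)
  rw [hstar] at hdec
  refine ⟨N, hN, hdec.of_sdiff_star hF (by simpa using hx) (by simpa using hfa)
    (fun v _ => hπf v) fun r hr v hva he => ?_⟩
  obtain rfl : r = x := mem_singleton.1 hr
  exact hf v (degreeIn_pos_of_mem he) (by simp [hE]) (by simpa using hva) fun h => hF r (h ▸ he)

theorem six_dvd_potential (hF : Loopless F)
    (hodd : ∀ v, 0 < degreeIn F v → Odd (degreeIn F v + π v)) : 6 ∣ potential F π := by
  have hweight (v : V) : vertexWeight (degreeIn F v) (π v) =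
      3 * (π v + (degreeIn F v + π v) % 2) := by
    have := hodd v
    simp only [vertexWeight, Nat.odd_iff] at *
    grind
  have hsum : Even (∑ v, (degreeIn F v + (π v + (degreeIn F v + π v) % 2))) :=
    even_sum _ fun v _ => by grind
  rw [sum_add_distrib, Nat.even_add] at hsum
  simp only [potential, hweight, ← mul_sum]
  exact mul_dvd_mul_left 3 (even_iff_two_dvd.1 (hsum.1 (even_sum_degreeIn hF)))

theorem withinPotential_of_forall_odd (hH : WithinPotentialBelow F) (hF : Loopless F) {a : V}
    (ha : 0 < degreeIn F a) (hodd : ∀ v, 0 < degreeIn F v → Odd (degreeIn F v + π v)) :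
    WithinPotential F π := by
  have hE : dangerous F (π + Pi.single a 1) = ∅ := filter_eq_empty_iff.2 fun v _ hv => by
    have := hodd v
    simp only [Pi.add_apply, Pi.single_apply] at hv
    grind
  obtain ⟨N, hN, hdec⟩ := withinPotential_of_even hH hF hE ha (by
    simpa [← add_assoc] using (hodd a ha).add_one)
  have hpot : potential F (π + Pi.single a 1) = potential F π + 4 := by
    have hweight (v : V) : vertexWeight (degreeIn F v) ((π + Pi.single a 1 : V → ℕ) v) =
        vertexWeight (degreeIn F v) (π v) + if v = a then 4 else 0 := by
      have := hodd v
      simp only [vertexWeight, Pi.add_apply, Pi.single_apply, Nat.odd_iff] at *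
      grind
    simp only [potential, hweight, sum_add_distrib, sum_ite_eq', mem_univ, if_true]
  have := six_dvd_potential hF hodd
  exact ⟨N, by omega, hdec.mono (fun v => Nat.le_add_right _ _) le_rfl⟩

end NonadjacentDangerousVertices

section OneStar

variable {V : Type*} [DecidableEq V] [Fintype V] {F : Finset (Sym2 V)} {π : V → ℕ} {a : V}
  {P : Finset V}

theorem isStarForest_single (hF : Loopless F) (ha : a ∈ dangerous F π)
    (hP : P ⊆ dangerousNbrs F π a) :
    IsStarForest F π [a] (fun c => if c = a then dangerousNbrs F π a \ P else ∅) P := by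
  have haa := hF.notMem_dangerousNbrs π a
  have hdang {v : V} (hv : v ∈ dangerousNbrs F π a) : v ∈ dangerous F π :=
    (mem_dangerousNbrs.1 hv).1
  constructor <;> grind

theorem pending_ite_eq (a : V) (Q : Finset V) :
    pending (fun c => if c = a then Q else ∅) = star a Q := by
  ext e
  induction e with
  | _ u v =>
    simp only [mk_mem_pending, mk_mem_star]
    grind

theorem WithinPotentialBelow.exists_absorb_star (hH : WithinPotentialBelow F) (hF : Loopless F)
    (ha : a ∈ dangerous F π) (hP : P ⊆ dangerousNbrs F π a) {T : Finset V}
    (hT : T = dangerousNbrs F π a \ P) (hne : T.Nonempty) :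
    ∃ N f, ∃ Q ⊆ T, Decomposable (F \ star a Q) f N ∧ π ≤ f ∧ #T % 2 + #(T \ Q) ≤ f a ∧
      (∀ v, 0 < degreeIn F v → f v = 0 →
        v ∈ dangerous F π ∧ (v ∈ dangerousNbrs F π a → v ∈ T \ Q)) ∧
      2 * #Q ≤ #T ∧ 6 * N + #T + #T % 2 ≤ potential F π + 2 * #P := by
  have hforest := isStarForest_single hF ha hP
  rw [← hT] at hforest
  set R : V → Finset V := fun c => if c = a then T else ∅
  have hRa : R a = T := if_pos rfl
  obtain ⟨N, f, hdec, hπf, hzero, hN⟩ := hforest.exists_decomposable hH hF ⟨a, hRa ▸ hne⟩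
  have hzero' {v : V} (hv : 0 < degreeIn F v) (h0 : f v = 0) : v ∉ dangerousNbrs F π a := by
    obtain ⟨-, hvP, hvR, -⟩ := hzero v hv h0
    exact fun hva => hvR a (hRa ▸ hT ▸ mem_sdiff.2 ⟨hva, hvP⟩)
  have hTa {x : V} (hx : x ∈ T) : x ∈ dangerousNbrs F π a := (mem_sdiff.1 (hT ▸ hx)).1
  have hdang {x : V} (hx : x ∈ T) : x ∈ dangerous F π := (mem_dangerousNbrs.1 (hTa hx)).1
  obtain ⟨S, hST, hhalf, f', hdec', hf', hf'a⟩ := hdec.exists_absorb (T := T) (Z := ∅)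
    hforest.isOriented hRa.ge
    (fun x hx => Nat.one_le_iff_ne_zero.2 fun h0 =>
      hzero' (mem_dangerous.1 (hdang hx)).2.2 h0 (hTa hx))
    fun v hv h0 => by
      have hav := (mem_sdiff.1 hv).1
      have hpos := degreeIn_pos_of_mem hav
      exact absurd (mem_dangerousNbrs.2 ⟨(hzero v hpos h0).1, hav⟩) (hzero' hpos h0)
  have hupdate : Function.update R a (R a \ S) = fun c => if c = a then T \ S else ∅ := by
    ext1 c
    grind [Function.update_apply]
  rw [hupdate, pending_ite_eq] at hdec'
  refine ⟨N, f', T \ S, sdiff_subset, hdec', fun v => ?_, ?_, fun v hv h0 => ?_,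
    by simpa using hhalf, by simpa [hRa, add_assoc] using hN⟩
  · by_cases hv : v ∈ S
    · simp [(mem_dangerous.1 (hdang (hST hv))).1]
    · exact (hπf v).trans (hf' v hv)
  · have := hzero a (mem_dangerous.1 ha).2.2
    rw [Finset.sdiff_sdiff_eq_self hST]
    grind
  · rw [Finset.sdiff_sdiff_eq_self hST]
    by_cases hvS : v ∈ S
    · exact ⟨hdang (hST hvS), fun _ => hvS⟩
    · have h0 := Nat.eq_zero_of_le_zero (h0 ▸ hf' v hvS)
      exact ⟨(hzero v hv h0).1, fun h => absurd h (hzero' hv h0)⟩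

theorem Decomposable.withinPotential_of_sdiff_star {f : V → ℕ} {N k : ℕ} {Q : Finset V}
    (h : Decomposable (F \ star a Q) f N) (ha : a ∈ dangerous F π) (hF : Loopless F)
    (hQ : Q ⊆ dangerousNbrs F π a) (hπ : ∀ v, v ≠ a → π v ≤ f v) (hcard : #Q ≤ 3 * k)
    (hk : k ≤ f a) (hN : 6 * (N + k) ≤ potential F π) : WithinPotential F π := by
  have hunion := h.union_star (fun haQ => hF.notMem_dangerousNbrs π a (hQ haQ))
    (fun x hx => by simp [mk_mem_star, hx]) hcard hk
  have hsub : star a Q ⊆ F := image_subset_iff.2 fun x hx => (mem_dangerousNbrs.1 (hQ hx)).2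
  rw [sdiff_union_of_subset hsub] at hunion
  refine ⟨_, hN, hunion.mono (fun v => ?_) le_rfl⟩
  by_cases hv : v = a
  · simp [hv, (mem_dangerous.1 ha).1]
  · simpa [hv] using hπ v hv

theorem withinPotential_of_star (hH : WithinPotentialBelow F) (hF : Loopless F)
    (ha : a ∈ dangerous F π) (hP : P ⊆ dangerousNbrs F π a)
    (hne : (dangerousNbrs F π a \ P).Nonempty)
    (hbudget : 6 * starCost 0 #(dangerousNbrs F π a \ P) 0 + 2 * #P ≤
      #(dangerousNbrs F π a \ P) + #(dangerousNbrs F π a \ P) % 2) :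
    WithinPotential F π := by
  obtain ⟨N, f, Q, hQ, hdec, hπf, hfa, -, hhalf, hN⟩ := hH.exists_absorb_star hF ha hP rfl hne
  have hcard := card_sdiff_add_card_eq_card hQ
  have := card_pos.2 hne
  unfold starCost at hbudget
  exact hdec.withinPotential_of_sdiff_star ha hF (hQ.trans sdiff_subset) (fun v _ => hπf v)
    (k := (#(dangerousNbrs F π a \ P) / 2 + 2) / 3) (by omega) (by omega) (by omega)

theorem withinPotential_of_card_dangerousNbrs_mod (hH : WithinPotentialBelow F) (hF : Loopless F)
    (ha : a ∈ dangerous F π) (hne : (dangerousNbrs F π a).Nonempty)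
    (h3 : #(dangerousNbrs F π a) % 6 ≠ 3) (h4 : #(dangerousNbrs F π a) % 6 ≠ 4) :
    WithinPotential F π := by
  by_cases h2 : #(dangerousNbrs F π a) % 6 = 2
  · obtain ⟨z, hz⟩ := hne
    have hcard := card_sdiff_add_card_eq_card (singleton_subset_iff.2 hz)
    rw [card_singleton] at hcard
    refine withinPotential_of_star hH hF ha (singleton_subset_iff.2 hz) (card_pos.1 (by omega)) ?_
    rw [card_singleton, starCost]
    omega
  · refine withinPotential_of_star (P := ∅) hH hF ha (empty_subset _) (by simpa using hne) ?_
    rw [sdiff_empty, card_empty, starCost]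
    omega

/-- If one edge too many is left over, it is absorbed from its leaf. -/
theorem withinPotential_of_dangerousNbrs_subset (hH : WithinPotentialBelow F) (hF : Loopless F)
    (ha : a ∈ dangerous F π) (hP : P ⊆ dangerousNbrs F π a) (hP2 : #P ≤ 2)
    (hcard : #(dangerousNbrs F π a \ P) % 6 = 3)
    (hsub : ∀ x ∈ dangerousNbrs F π a \ P,
      dangerousNbrs F π x ⊆ insert a (dangerousNbrs F π a)) :
    WithinPotential F π := by
  set T := dangerousNbrs F π a \ P with hT
  obtain ⟨N, f, Q, hQ, hdec, hπf, hfa, hzero, hhalf, hN⟩ :=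
    hH.exists_absorb_star hF ha hP hT (card_pos.1 (by omega))
  have hQa : Q ⊆ dangerousNbrs F π a := hQ.trans sdiff_subset
  have hcardQ := card_sdiff_add_card_eq_card hQ
  by_cases hle : #Q ≤ 3 * (#T / 6)
  · exact hdec.withinPotential_of_sdiff_star ha hF hQa (fun v _ => hπf v) hle (by omega) (by omega)
  obtain ⟨x, hx⟩ : Q.Nonempty := card_pos.1 (by omega)
  have hxa : x ≠ a := ne_of_mem_of_not_mem (hQa hx) (hF.notMem_dangerousNbrs π a)
  obtain ⟨_, hmem, hins⟩ := hdec.exists_insert (a := x) (T := {a}) (Z := T \ Q)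
    (by simpa using hxa) (by simp [mk_mem_star, hx])
    (fun v hv h0 => by
      rw [mem_sdiff, mk_mem_star] at hv
      obtain ⟨hvdang, hva⟩ := hzero v (degreeIn_pos_of_mem hv.1) h0
      have := hsub x (hQ hx) (mem_dangerousNbrs.2 ⟨hvdang, hv.1⟩)
      grind)
    (by rw [sum_singleton]; omega)
  have hunion : insert s(x, a) (F \ star a Q) = F \ star a (Q.erase x) := by
    have := (mem_dangerousNbrs.1 (hQa hx)).2
    ext e
    induction e with
    | _ u v =>
      simp only [mem_insert, mem_sdiff, mk_mem_star, Sym2.eq_iff]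
      grind
  rw [mem_singleton.1 hmem, hunion] at hins
  have hcardx := card_erase_of_mem hx
  refine hins.withinPotential_of_sdiff_star ha hF ((erase_subset _ _).trans hQa)
    (fun v hv => (hπf v).trans ?_) (k := #T / 6) (by omega) ?_ (by omega)
  · simp [hv]
  · simp only [Pi.sub_apply, Pi.add_apply, Pi.single_eq_same, Pi.single_eq_of_ne hxa.symm]
    omega

end OneStar

section TwoStarsThroughAnEdge

variable {V : Type*} [DecidableEq V]

theorem exists_path_through_edge {a b : V} {X Y : Finset V} (hab : a ≠ b) (ha : a ∉ X ∪ Y)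
    (hb : b ∉ X ∪ Y) (hXY : Disjoint X Y) (hX : #X ≤ 1) (hY : #Y ≤ 1) :
    ∃ p : List V, p ≠ [] ∧ p.Nodup ∧
      (pathEdges p).toFinset = star a (insert b X) ∪ star b Y := by
  have hcases {Z : Finset V} (hZ : #Z ≤ 1) : Z = ∅ ∨ ∃ z, Z = {z} := by
    rwa [Nat.le_one_iff_eq_zero_or_eq_one, card_eq_zero, card_eq_one] at hZ
  obtain rfl | ⟨x, rfl⟩ := hcases hX <;> obtain rfl | ⟨y, rfl⟩ := hcases hY
  · exact ⟨[a, b], by simp, by simpa using hab, by simp [pathEdges, star]⟩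
  · exact ⟨[a, b, y], by simp, by simp; grind, by simp [pathEdges, star]⟩
  · refine ⟨[x, a, b], by simp, by simp; grind, ?_⟩
    simp [pathEdges, star, Sym2.eq_swap (a := x), pair_comm]
  · refine ⟨[x, a, b, y], by simp, by simp; grind, ?_⟩
    simp [pathEdges, star, Sym2.eq_swap (a := x), insert_comm]

variable [Fintype V] {F : Finset (Sym2 V)} {π : V → ℕ} {a b : V}

/-- The dangerous neighbours of `b` other than `a` that are not dangerous neighbours of `a`. -/
def privateNbrs (F : Finset (Sym2 V)) (π : V → ℕ) (a b : V) : Finset V :=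
  dangerousNbrs F π b \ insert a (dangerousNbrs F π a)

theorem mem_privateNbrs {v : V} : v ∈ privateNbrs F π a b ↔
    v ∈ dangerousNbrs F π b ∧ v ≠ a ∧ v ∉ dangerousNbrs F π a := by
  simp [privateNbrs]

/-- The stars at the two ends of the edge `ab` that are removed when `b` is a dangerous neighbour
of `a`; the edge itself belongs to the star of `a`. -/
def doubleStar (F : Finset (Sym2 V)) (π : V → ℕ) (a b c : V) : Finset V :=
  if c = a then dangerousNbrs F π a else if c = b then privateNbrs F π a b else ∅

theorem mem_doubleStar {c v : V} : v ∈ doubleStar F π a b c ↔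
    c = a ∧ v ∈ dangerousNbrs F π a ∨ c = b ∧ v ∈ privateNbrs F π a b := by
  grind [doubleStar, mem_privateNbrs, mem_dangerousNbrs]

theorem isOriented_doubleStar (hF : Loopless F) : IsOriented F (doubleStar F π a b) := by
  have haa := hF.notMem_dangerousNbrs π a
  have hbb := hF.notMem_dangerousNbrs π b
  constructor <;> grind [doubleStar, mem_dangerousNbrs, mem_privateNbrs]

theorem degreeIn_pending_doubleStar (hF : Loopless F) (hb : b ∈ dangerousNbrs F π a) (v : V) :
    degreeIn (pending (doubleStar F π a b)) v =
      if v = a then #(dangerousNbrs F π a) else if v = b then #(privateNbrs F π a b) + 1 else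
        if v ∈ dangerousNbrs F π a ∪ privateNbrs F π a b then 1 else 0 := by
  have haa := hF.notMem_dangerousNbrs π a
  have hbb := hF.notMem_dangerousNbrs π b
  have hcentres : ({c | v ∈ doubleStar F π a b c} : Finset V) =
      if v ∈ dangerousNbrs F π a then {a} else if v ∈ privateNbrs F π a b then {b} else ∅ := by
    ext c
    simp only [mem_filter, mem_univ, true_and]
    grind [doubleStar, mem_privateNbrs]
  rw [degreeIn_pending (isOriented_doubleStar hF), hcentres]
  grind [doubleStar, mem_privateNbrs]

theorem card_le_card_odd_doubleStar (hF : Loopless F) (hb : b ∈ dangerousNbrs F π a) :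
    #(dangerousNbrs F π a) - 1 + #(privateNbrs F π a b) + #(dangerousNbrs F π a) % 2 +
      (#(privateNbrs F π a b) + 1) % 2 ≤
      #{v | Odd (degreeIn (pending (doubleStar F π a b)) v)} := by
  have haa := hF.notMem_dangerousNbrs π a
  have := hF.notMem_dangerousNbrs π b
  have hab : a ≠ b := fun h => haa (h ▸ hb)
  have hdeg := degreeIn_pending_doubleStar hF hb
  have hsub : (dangerousNbrs F π a).erase b ∪ privateNbrs F π a b ∪
      {c ∈ ({a, b} : Finset V) | Odd (degreeIn (pending (doubleStar F π a b)) c)} ⊆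
      ({v | Odd (degreeIn (pending (doubleStar F π a b)) v)} : Finset V) := by
    intro v hv
    rw [mem_filter, hdeg]
    grind [mem_privateNbrs]
  refine le_trans (le_of_eq ?_) (card_le_card hsub)
  rw [card_union_of_disjoint, card_union_of_disjoint, card_erase_of_mem hb, card_filter,
    sum_pair hab, hdeg, hdeg, if_pos rfl, if_neg hab.symm, if_pos rfl]
  · grind
  · exact disjoint_left.2 fun v => by grind [mem_privateNbrs]
  · exact disjoint_left.2 fun v => by grind [mem_privateNbrs]

theorem canAbsorb_doubleStar (hF : Loopless F) (hb : b ∈ dangerousNbrs F π a)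
    (hA : 1 < #(dangerousNbrs F π a)) (hB : 1 < #(privateNbrs F π a b)) {f : V → ℕ}
    (hf : ∀ v, v ≠ a → v ≠ b → 0 < degreeIn F v → f v = 0 →
      v ∈ dangerous F π ∧ v ∉ dangerousNbrs F π a ∪ privateNbrs F π a b) :
    CanAbsorb F (fun c => (doubleStar F π a b c).erase b) (fun _ => ∅) [b, a]
      (doubleStar F π a b) f := by
  have haa := hF.notMem_dangerousNbrs π a
  have hbb := hF.notMem_dangerousNbrs π b
  have hba : b ≠ a := fun h => haa (h ▸ hb)
  have hTa : (doubleStar F π a b a).erase b = (dangerousNbrs F π a).erase b := by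
    rw [doubleStar, if_pos rfl]
  have hTb : (doubleStar F π a b b).erase b = privateNbrs F π a b := by
    grind [doubleStar, mem_privateNbrs]
  refine ⟨by simpa using hba, fun _ => erase_subset _ _, ?_, ?_, ?_, ?_, ?_⟩
  · grind [mem_doubleStar, mem_privateNbrs]
  · intro c x _ hx
    have hdang : x ∈ dangerous F π := by
      grind [mem_doubleStar, mem_privateNbrs, mem_dangerousNbrs]
    have := hf x
    grind [mem_doubleStar, mem_privateNbrs, mem_dangerous]
  · have := card_erase_of_mem hb
    grind
  · intro c v hc hv he h0
    obtain ⟨heF, _⟩ := mem_sdiff.1 he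
    have := hf v
    have := degreeIn_pos_of_mem heF
    grind [mk_mem_pending, mem_doubleStar, mem_privateNbrs, mem_dangerousNbrs]
  · have hedge : s(b, a) ∈ pending (doubleStar F π a b) :=
      mk_mem_pending.2 (Or.inr (mem_doubleStar.2 (Or.inl ⟨rfl, hb⟩)))
    simp only [List.pairwise_cons, List.mem_singleton, forall_eq, hTa, hTb]
    refine ⟨⟨disjoint_left.2 ?_, ?_, ?_⟩, ?_⟩
    · grind [mem_privateNbrs]
    · simp [hedge]
    · grind [mem_privateNbrs, mem_dangerousNbrs]
    · simp

theorem WithinPotentialBelow.exists_absorb_doubleStar (hH : WithinPotentialBelow F)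
    (hF : Loopless F) (ha : a ∈ dangerous F π) (hb : b ∈ dangerousNbrs F π a)
    (hA : 1 < #(dangerousNbrs F π a)) (hB : 1 < #(privateNbrs F π a b)) :
    ∃ N f R, Decomposable (F \ pending R) f N ∧ R ≤ doubleStar F π a b ∧ b ∈ R a ∧
      2 * #(R a) ≤ #(dangerousNbrs F π a) + 1 ∧ 2 * #(R b) ≤ #(privateNbrs F π a b) ∧
      #(dangerousNbrs F π a) ≤ f a + #(R a) ∧ #(privateNbrs F π a b) ≤ f b + #(R b) ∧
      (∀ v, v ≠ a → v ≠ b → π v ≤ f v) ∧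
      6 * N + (#(dangerousNbrs F π a) - 1 + #(privateNbrs F π a b) + #(dangerousNbrs F π a) % 2 +
        (#(privateNbrs F π a b) + 1) % 2) ≤ potential F π := by
  have hR := isOriented_doubleStar (π := π) (a := a) (b := b) hF
  have hdang {c v : V} (hv : v ∈ doubleStar F π a b c) : c ∈ dangerous F π ∧ v ∈ dangerous F π := by
    grind [mem_doubleStar, mem_privateNbrs, mem_dangerousNbrs]
  obtain ⟨N, f, hdec, hπf, hf, hN⟩ := hH.exists_decomposable_sdiff_pending (P := ∅) hF hR
    ⟨a, b, mem_doubleStar.2 (Or.inl ⟨rfl, hb⟩)⟩ (fun _ _ => hdang) (empty_subset _) (by simp)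
  have habs := canAbsorb_doubleStar hF hb hA hB (f := f) fun v hva hvb hv h0 => by
    have := hf v hv h0
    rw [degreeIn_pending_doubleStar hF hb] at this
    grind
  obtain ⟨R', f', hdec', hR', -, hon, hf'⟩ := habs.exists_decomposable hF hR hdec
  have hcard := card_le_card_odd_doubleStar hF hb
  have hRa : doubleStar F π a b a = dangerousNbrs F π a := if_pos rfl
  have hba : b ≠ a := fun h => hF.notMem_dangerousNbrs π a (h ▸ hb)
  have hRb : doubleStar F π a b b = privateNbrs F π a b := by
    rw [doubleStar, if_neg hba, if_pos rfl]
  have hbb : b ∉ privateNbrs F π a b := by grind [mem_privateNbrs]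
  obtain ⟨hbR, hcarda, hfa⟩ := hon a (by simp)
  obtain ⟨-, hcardb, hfb⟩ := hon b (by simp)
  rw [hRa, card_erase_of_mem hb, card_empty] at hcarda
  rw [hRb, erase_eq_of_notMem hbb, card_empty] at hcardb
  rw [hRa] at hfa hbR
  rw [hRb] at hfb
  rw [card_empty] at hN
  refine ⟨N, f', R', hdec', hR', hbR (by simpa using hb), by omega, by omega, by omega, by omega,
    fun v _ _ => ?_, by omega⟩
  by_cases hv : ∃ c, v ∈ doubleStar F π a b c
  · obtain ⟨c, hc⟩ := hv
    simp [(mem_dangerous.1 (hdang hc).2).1]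
  · exact (hπf v).trans (hf' v fun c _ hc => absurd ⟨c, mem_of_mem_erase hc⟩ hv)

theorem Decomposable.exists_add_path_through_edge {R : V → Finset V} {f : V → ℕ} {N m n : ℕ}
    (h : Decomposable (F \ pending R) f N) (hR : IsOriented F R) (hb : b ∈ R a)
    (hdisj : Disjoint (R a) (R b)) (hm : #(R a) ≤ 3 * m + 2) (hn : #(R b) ≤ 3 * n + 1) :
    ∃ R' ≤ R, Decomposable (F \ pending R') f (N + 1) ∧ #(R' a) ≤ 3 * m ∧ #(R' b) ≤ 3 * n := by
  have hab : a ≠ b := fun hab => hR.notMem_self b (by simpa [hab] using hb)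
  obtain ⟨X, hXR, hX⟩ := exists_subset_card_eq (Nat.sub_le #((R a).erase b) (3 * m))
  obtain ⟨Y, hYR, hY⟩ := exists_subset_card_eq (Nat.sub_le #(R b) (3 * n))
  have hcard := card_erase_of_mem hb
  have hRa : a ∉ R a := hR.notMem_self a
  have hRb : b ∉ R b := hR.notMem_self b
  have hRba : a ∉ R b := hR.asymm hb
  have hXa : insert b X ⊆ R a := insert_subset hb (hXR.trans (erase_subset _ _))
  obtain ⟨p, hne, hp, hedges⟩ := exists_path_through_edge (X := X) (Y := Y) hab (by grind)
    (by grind) (by grind [disjoint_left]) (by omega) (by omega)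
  have hpath := h.add_path hne hp fun e he => by
    rw [← Multiset.mem_toFinset, hedges] at he
    induction e with
    | _ u v =>
      rw [mem_union, mk_mem_star, mk_mem_star] at he
      grind [mk_mem_pending]
  have hR' := hR.anti (R' := Function.update R a (R a \ insert b X))
    (update_le_self_iff.2 sdiff_subset)
  rw [hedges, ← union_assoc, hR.sdiff_pending_union_star hXa,
    hR'.sdiff_pending_union_star (by rwa [Function.update_of_ne hab.symm])] at hpath
  refine ⟨_, ?_, hpath, ?_, ?_⟩
  · intro c
    grind [Function.update_apply]
  · rw [Function.update_of_ne hab, Function.update_self, card_sdiff_of_subset hXa,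
      card_insert_of_notMem fun hbX => notMem_erase b _ (hXR hbX)]
    omega
  · rw [Function.update_self, Function.update_of_ne hab.symm, card_sdiff_of_subset hYR]
    omega

theorem withinPotential_of_edge (hH : WithinPotentialBelow F) (hF : Loopless F)
    (ha : a ∈ dangerous F π) (hb : b ∈ dangerousNbrs F π a)
    (hA : #(dangerousNbrs F π a) % 6 = 3 ∨ #(dangerousNbrs F π a) % 6 = 4)
    (hB : #(privateNbrs F π a b) % 6 = 2 ∨ #(privateNbrs F π a b) % 6 = 3) :
    WithinPotential F π := by
  have hR := isOriented_doubleStar (π := π) (a := a) (b := b) hF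
  have hab : a ≠ b := fun h => hF.notMem_dangerousNbrs π a (h ▸ hb)
  obtain ⟨N, f, R, hdec, hle, hbR, hcarda, hcardb, hfa, hfb, hπ, hN⟩ :=
    hH.exists_absorb_doubleStar hF ha hb (by omega) (by omega)
  have hdisj : Disjoint (R a) (R b) := disjoint_left.2 fun v hva hvb => by
    have hva := hle a hva
    have hvb := hle b hvb
    grind [mem_doubleStar, mem_privateNbrs]
  obtain ⟨R', hR', hdec', hm, hn⟩ := hdec.exists_add_path_through_edge (hR.anti hle) hbR hdisj
    (m := #(dangerousNbrs F π a) / 6) (n := #(privateNbrs F π a b) / 6) (by omega) (by omega)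
  refine hdec'.withinPotential_of_sdiff_pending (l := [a, b])
    (k := fun c => if c = a then #(dangerousNbrs F π a) / 6 else #(privateNbrs F π a b) / 6)
    (hR.anti (hR'.trans hle)) (by simpa using hab) ?_ (fun c hc => ?_) ?_ ?_ ?_ ?_
  · simpa [ha] using (mem_dangerousNbrs.1 hb).1
  · refine subset_empty.1 (((hR'.trans hle) c).trans_eq ?_)
    grind [doubleStar]
  · simpa using hπ
  · simpa [hab.symm] using ⟨hm, hn⟩
  · simp only [List.mem_cons, List.not_mem_nil, or_false, forall_eq_or_imp, forall_eq]
    omega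
  · simp only [List.map_cons, List.map_nil, if_true, if_neg hab.symm, List.sum_cons, List.sum_nil]
    omega

end TwoStarsThroughAnEdge

section ThreeStars

variable {V : Type*} [DecidableEq V] [Fintype V] {F : Finset (Sym2 V)} {π : V → ℕ} {a b d : V}
  {K P Q T U : Finset V}

theorem card_dangerousNbrs_eq (hF : Loopless F) (ha : a ∈ dangerous F π)
    (hb : b ∈ dangerousNbrs F π a) :
    #(dangerousNbrs F π b) =
      #(dangerousNbrs F π a ∩ dangerousNbrs F π b) + #(privateNbrs F π a b) + 1 := by
  have haA := hF.notMem_dangerousNbrs π a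
  have hinsert : insert a (dangerousNbrs F π a) ∩ dangerousNbrs F π b =
      insert a (dangerousNbrs F π a ∩ dangerousNbrs F π b) :=
    insert_inter_of_mem (mem_dangerousNbrs_symm ha hb)
  rw [privateNbrs, ← card_inter_add_card_sdiff _ (insert a (dangerousNbrs F π a)), inter_comm,
    hinsert, card_insert_of_notMem (by grind)]
  omega

theorem isStarForest_pair (hF : Loopless F) (ha : a ∈ dangerous F π) (hb : b ∈ dangerousNbrs F π a)
    (hK : K ⊆ dangerousNbrs F π a ∩ dangerousNbrs F π b) (hP : P ⊆ dangerousNbrs F π a)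
    (hbP : b ∉ P) (hKP : Disjoint K P) :
    IsStarForest F π [b, a] (fun c => if c = a then dangerousNbrs F π a \ insert b (K ∪ P) else
      if c = b then privateNbrs F π a b ∪ K else ∅) P := by
  have haa := hF.notMem_dangerousNbrs π a
  have hbb := hF.notMem_dangerousNbrs π b
  rw [disjoint_left] at hKP
  constructor <;> grind [mem_privateNbrs, mem_dangerousNbrs]

theorem withinPotential_of_two_stars (hH : WithinPotentialBelow F) (hF : Loopless F)
    (ha : a ∈ dangerous F π) (hb : b ∈ dangerousNbrs F π a)
    (hK : K ⊆ dangerousNbrs F π a ∩ dangerousNbrs F π b) (hP : P ⊆ dangerousNbrs F π a)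
    (hbP : b ∉ P) (hKP : Disjoint K P) {s : ℕ}
    (hs : #(dangerousNbrs F π a) = s + 1 + #K + #P) (hodd : s % 2 = 1)
    (hcount : max 1 (starCost #K #(privateNbrs F π a b) 0) + #(privateNbrs F π a b) / 2 ≤
      #(privateNbrs F π a b) + (#(privateNbrs F π a b) + #K) % 2)
    (hbudget : 6 * (starCost #K #(privateNbrs F π a b) 0 + starCost 0 s 0) + 2 * #P ≤
      #(privateNbrs F π a b) + #K + (#(privateNbrs F π a b) + #K) % 2 + s + 1) :
    WithinPotential F π := by
  have hab : a ≠ b := fun h => hF.notMem_dangerousNbrs π a (h ▸ hb)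
  have hbb := hF.notMem_dangerousNbrs π b
  have hforest := isStarForest_pair hF ha hb hK hP hbP hKP
  set S := dangerousNbrs F π a \ insert b (K ∪ P)
  have hcardS : #S = s := by
    rw [card_sdiff_of_subset (by grind), card_insert_of_notMem (by grind),
      card_union_of_disjoint hKP]
    omega
  have hcardB : #(privateNbrs F π a b ∪ K) = #(privateNbrs F π a b) + #K :=
    card_union_of_disjoint (disjoint_left.2 (by grind [mem_privateNbrs]))
  have hcardK : #((privateNbrs F π a b ∪ K) \ privateNbrs F π a b) = #K := by
    rw [card_sdiff_of_subset subset_union_left, hcardB, Nat.add_sub_cancel_left]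
  refine hforest.withinPotential hH hF (Z := fun _ => ∅)
    (T := fun c => if c = a then S else privateNbrs F π a b) ⟨a, ?_⟩ ?_ ?_ ?_ ?_ ?_
  · rw [if_pos rfl, ← card_pos]
    omega
  · grind
  · have ha_count : max 1 (starCost 0 s 0) + s / 2 ≤ s + s % 2 := by
      unfold starCost
      omega
    simp [hab.symm, hcardS, hcardK, hcardB, hcount, ha_count]
  · intro c hc v hv hvl
    by_cases hvS : v ∈ S
    · exact Or.inr (Or.inr ⟨a, by rwa [if_pos rfl]⟩)
    · have : v ∈ P ∨ v ∈ privateNbrs F π a b ∪ K := by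
        grind [mem_privateNbrs]
      exact this.imp_right fun hvR => Or.inr ⟨b, by rwa [if_neg hab.symm, if_pos rfl]⟩
  · have hnotMem : ∀ v ∈ privateNbrs F π a b, s(a, v) ∉ F := by
      grind [mem_privateNbrs, mem_dangerousNbrs]
    simpa [hab.symm, hcardS, Nat.odd_iff, hodd] using hnotMem
  · simp only [List.map_cons, List.map_nil, List.sum_cons, List.sum_nil, if_true, if_neg hab.symm,
      sdiff_self, bot_eq_empty, card_empty, hcardS, hcardK, hcardB]
    omega

/-- The stars removed at two dangerous neighbours `b` and `d` of `a` and at `a` itself. The star of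
`b` consists of private neighbours `T` and of common neighbours `K`, the star of `d` of private
neighbours `U`, and the star of `a` of its other dangerous neighbours, except for those in `P`. -/
def tripleStar (F : Finset (Sym2 V)) (π : V → ℕ) (a b d : V) (T U K P : Finset V) (c : V) :
    Finset V :=
  if c = a then dangerousNbrs F π a \ insert b (insert d (K ∪ P)) else
    if c = b then T ∪ K else if c = d then U else ∅

theorem isStarForest_tripleStar (hF : Loopless F) (ha : a ∈ dangerous F π)
    (hb : b ∈ dangerousNbrs F π a) (hd : d ∈ dangerousNbrs F π a) (hbd : b ≠ d)
    (hT : T ⊆ privateNbrs F π a b) (hU : U ⊆ privateNbrs F π a d) (hTU : Disjoint T U)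
    (hK : K ⊆ dangerousNbrs F π a ∩ dangerousNbrs F π b) (hdK : d ∉ K)
    (hP : P ⊆ dangerousNbrs F π a) (hbP : b ∉ P) (hdP : d ∉ P) (hKP : Disjoint K P) :
    IsStarForest F π [b, d, a] (tripleStar F π a b d T U K P)
      (P ∪ (privateNbrs F π a b ∪ privateNbrs F π a d) \ (T ∪ U)) := by
  have haa := hF.notMem_dangerousNbrs π a
  have hbb := hF.notMem_dangerousNbrs π b
  have hdd := hF.notMem_dangerousNbrs π d
  have hdang {c v : V} (hv : v ∈ dangerousNbrs F π c) : v ∈ dangerous F π :=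
    (mem_dangerousNbrs.1 hv).1
  rw [disjoint_left] at hKP hTU
  refine ⟨?_, ?_, ?_, ?_, ?_, ?_, ?_⟩
  · grind
  · simp [ha, hdang hb, hdang hd]
  all_goals grind [tripleStar, mem_privateNbrs]

theorem mem_extra_or_exists_mem_tripleStar {c v : V} (hab : a ≠ b) (had : a ≠ d) (hbd : b ≠ d)
    (hc : c ∈ [b, d, a]) (hv : v ∈ dangerousNbrs F π c) (hvl : v ∉ [b, d, a]) :
    v ∈ P ∪ (privateNbrs F π a b ∪ privateNbrs F π a d) \ (T ∪ U) ∨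
      ∃ c', v ∈ tripleStar F π a b d T U K P c' := by
  by_cases hva : v ∈ tripleStar F π a b d T U K P a
  · exact Or.inr ⟨a, hva⟩
  · have hcover : v ∈ P ∪ (privateNbrs F π a b ∪ privateNbrs F π a d) \ (T ∪ U) ∨
        v ∈ T ∪ K ∨ v ∈ U := by
      grind [tripleStar, mem_privateNbrs]
    refine hcover.imp_right fun hvR => hvR.elim (fun h => ⟨b, ?_⟩) fun h => ⟨d, ?_⟩
    · rwa [tripleStar, if_neg hab.symm, if_pos rfl]
    · rwa [tripleStar, if_neg had.symm, if_neg hbd.symm, if_pos rfl]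

theorem withinPotential_of_three_stars (hH : WithinPotentialBelow F) (hF : Loopless F)
    (ha : a ∈ dangerous F π) (hb : b ∈ dangerousNbrs F π a) (hd : d ∈ dangerousNbrs F π a)
    (hbd : b ≠ d) (hT : T ⊆ privateNbrs F π a b) (hU : U ⊆ privateNbrs F π a d)
    (hTU : Disjoint T U) (hK : K ⊆ dangerousNbrs F π a ∩ dangerousNbrs F π b) (hdK : d ∉ K)
    (hP : P ⊆ dangerousNbrs F π a) (hbP : b ∉ P) (hdP : d ∉ P) (hKP : Disjoint K P) {s z : ℕ}
    (hs : #(dangerousNbrs F π a) = s + 2 + #K + #P) (hodd : s % 2 = 1)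
    (hz : #(T ∩ dangerousNbrs F π d) = z)
    (hcountb : max 1 (starCost #K #T ((#U + 1) % 2)) + (#T + (#U + 1) % 2) / 2 ≤
      #T + (#T + #K) % 2)
    (hcountd : max 1 (starCost 0 #U z) + (#U + z) / 2 ≤ #U + #U % 2)
    (hbudget : 6 * (starCost #K #T ((#U + 1) % 2) + starCost 0 #U z + starCost 0 s 0) +
      2 * (#P + #((privateNbrs F π a b ∪ privateNbrs F π a d) \ (T ∪ U))) ≤
      #T + #K + (#T + #K) % 2 + #U + #U % 2 + s + 1) :
    WithinPotential F π := by
  have hab : a ≠ b := fun h => hF.notMem_dangerousNbrs π a (h ▸ hb)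
  have had : a ≠ d := fun h => hF.notMem_dangerousNbrs π a (h ▸ hd)
  set R := tripleStar F π a b d T U K P with hR
  have hforest : IsStarForest F π [b, d, a] R _ :=
    isStarForest_tripleStar hF ha hb hd hbd hT hU hTU hK hdK hP hbP hdP hKP
  have hRb : R b = T ∪ K := by rw [hR, tripleStar, if_neg hab.symm, if_pos rfl]
  have hRd : R d = U := by rw [hR, tripleStar, if_neg had.symm, if_neg hbd.symm, if_pos rfl]
  have hcarda : #(R a) = s := by
    have hbb := hF.notMem_dangerousNbrs π b
    rw [hR, tripleStar, if_pos rfl, card_sdiff_of_subset (by grind),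
      card_insert_of_notMem (by grind), card_insert_of_notMem (by grind),
      card_union_of_disjoint hKP]
    omega
  have hdisj : Disjoint T K := disjoint_left.2 (by grind [mem_privateNbrs])
  have hcardb : #(T ∪ K) = #T + #K := card_union_of_disjoint hdisj
  have hcardZ : #(if Even #U then {d} else ∅) = (#U + 1) % 2 := by split_ifs <;> grind
  have hsdiff : (T ∪ K) \ T = K := hdisj.sup_sdiff_cancel_left
  have hcounta : max 1 (starCost 0 s 0) + s / 2 ≤ s + s % 2 := by grind [starCost]
  have hnotMem : ∀ v ∈ T ∪ U, s(a, v) ∉ F := by grind [mem_privateNbrs, mem_dangerousNbrs]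
  refine hforest.withinPotential hH hF
    (T := fun c => if c = b then T else R c)
    (Z := fun c => if c = b then if Even #U then {d} else ∅ else
      if c = d then T ∩ dangerousNbrs F π d else ∅)
    ⟨a, card_pos.1 (by omega)⟩ (by grind) ?_ (fun c hc v hv hvl => ?_) ?_ ?_
  · simp [hab, had, hbd.symm, hRb, hRd, hcarda, hcardb, hsdiff, hcardZ, hcounta, hz, hcountb,
      hcountd]
  · exact (mem_extra_or_exists_mem_tripleStar hab had hbd hc hv hvl).imp_right Or.inr
  · simp only [List.pairwise_cons, List.mem_cons, List.not_mem_nil, or_false, forall_eq_or_imp,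
      forall_eq, if_true, if_neg hbd.symm, if_neg hab, if_neg had, hRd, hcarda]
    have hevens : ¬ Even s := by simpa [Nat.odd_iff] using hodd
    have hTd : ∀ v ∈ T, s(d, v) ∈ F → v ∈ T ∩ dangerousNbrs F π d := by
      grind [mem_privateNbrs, mem_dangerousNbrs]
    have hTa : ∀ v ∈ T, s(a, v) ∉ F := fun v hv => hnotMem v (mem_union_left U hv)
    have hUa : ∀ v ∈ U, s(a, v) ∉ F := fun v hv => hnotMem v (mem_union_right T hv)
    simpa +contextual [hevens, hTa, hUa] using hTd
  · have := card_union_le P ((privateNbrs F π a b ∪ privateNbrs F π a d) \ (T ∪ U))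
    simp only [List.map_cons, List.map_nil, List.sum_cons, List.sum_nil, if_true, if_neg hab,
      if_neg had, if_neg hbd.symm, sdiff_self, bot_eq_empty, card_empty, hRb, hRd, hcarda, hcardb,
      hsdiff, hcardZ, hz]
    omega

end ThreeStars

section Induction

variable {V : Type*} [DecidableEq V] [Fintype V] {F : Finset (Sym2 V)} {π : V → ℕ} {a b d : V}

theorem withinPotential_of_card_mod_eq_three (hH : WithinPotentialBelow F) (hF : Loopless F)
    (ha : a ∈ dangerous F π) (hb : b ∈ dangerousNbrs F π a) (hA : #(dangerousNbrs F π a) % 6 = 3)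
    (hB : #(dangerousNbrs F π b) % 6 = 3 ∨ #(dangerousNbrs F π b) % 6 = 4)
    (hne : (privateNbrs F π a b).Nonempty) : WithinPotential F π := by
  by_cases h23 : #(privateNbrs F π a b) % 6 = 2 ∨ #(privateNbrs F π a b) % 6 = 3
  · exact withinPotential_of_edge hH hF ha hb (Or.inl hA) h23
  have hcard := card_dangerousNbrs_eq hF ha hb
  have hpos := hne.card_pos
  have h0 := card_empty (α := V)
  by_cases h4 : #(privateNbrs F π a b) % 6 = 4
  · obtain ⟨i, hi⟩ : (dangerousNbrs F π a ∩ dangerousNbrs F π b).Nonempty :=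
      card_pos.1 (by omega)
    have h1 := card_singleton i
    refine withinPotential_of_two_stars hH hF ha hb (K := {i}) (P := ∅)
      (s := #(dangerousNbrs F π a) - 2) (singleton_subset_iff.2 hi) (empty_subset _)
      (notMem_empty b) (disjoint_empty_right _) (by omega) (by omega) ?_ ?_ <;>
      unfold starCost <;> omega
  · obtain ⟨z, hz⟩ : ((dangerousNbrs F π a).erase b).Nonempty :=
      card_pos.1 (by rw [card_erase_of_mem hb]; omega)
    have h1 := card_singleton z
    refine withinPotential_of_two_stars hH hF ha hb (K := ∅) (P := {z})
      (s := #(dangerousNbrs F π a) - 2) (empty_subset _) (singleton_subset_iff.2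
      (mem_of_mem_erase hz)) (by grind) (disjoint_empty_left _) (by omega) (by omega) ?_ ?_ <;>
      unfold starCost <;> omega

theorem withinPotential_of_card_mod_eq_four (hH : WithinPotentialBelow F) (hF : Loopless F)
    (ha : a ∈ dangerous F π) (hb : b ∈ dangerousNbrs F π a) (hA : #(dangerousNbrs F π a) % 6 = 4)
    (hB : #(dangerousNbrs F π b) % 6 = 3 ∨ #(dangerousNbrs F π b) % 6 = 4)
    (hmod : #(privateNbrs F π a b) % 6 ≠ 0) : WithinPotential F π := by
  by_cases h23 : #(privateNbrs F π a b) % 6 = 2 ∨ #(privateNbrs F π a b) % 6 = 3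
  · exact withinPotential_of_edge hH hF ha hb (Or.inr hA) h23
  have hcard := card_dangerousNbrs_eq hF ha hb
  have hbb := hF.notMem_dangerousNbrs π b
  have h0 := card_empty (α := V)
  by_cases h1 : #(privateNbrs F π a b) % 6 = 1
  · refine withinPotential_of_two_stars hH hF ha hb (K := ∅) (P := ∅)
      (s := #(dangerousNbrs F π a) - 1) (empty_subset _) (empty_subset _) (notMem_empty b)
      (disjoint_empty_left _) (by omega) (by omega) ?_ ?_ <;>
      unfold starCost <;> omega
  · obtain ⟨i, hi⟩ : (dangerousNbrs F π a ∩ dangerousNbrs F π b).Nonempty :=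
      card_pos.1 (by omega)
    obtain ⟨z, hz⟩ : (((dangerousNbrs F π a).erase b).erase i).Nonempty := card_pos.1 (by
      rw [card_erase_of_mem (by grind), card_erase_of_mem hb]
      omega)
    have hcardi := card_singleton i
    have hcardz := card_singleton z
    refine withinPotential_of_two_stars hH hF ha hb (K := {i}) (P := {z})
      (s := #(dangerousNbrs F π a) - 3) (singleton_subset_iff.2 hi) (by grind) (by grind)
      (disjoint_singleton.2 (ne_of_mem_erase hz).symm) (by omega) (by omega) ?_ ?_ <;>
      unfold starCost <;> omega

theorem withinPotential_of_privateNbrs_sdiff_nonempty (hH : WithinPotentialBelow F)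
    (hF : Loopless F) (ha : a ∈ dangerous F π) (hb : b ∈ dangerousNbrs F π a)
    (hd : d ∈ dangerousNbrs F π a) (hbd : b ≠ d) (hA : #(dangerousNbrs F π a) % 6 = 4)
    (hB : #(dangerousNbrs F π b) % 6 = 4) (hmodb : #(privateNbrs F π a b) % 6 = 0)
    (hmodd : #(privateNbrs F π a d) % 6 = 0) (hned : (privateNbrs F π a d).Nonempty)
    (hne : (privateNbrs F π a b \ privateNbrs F π a d).Nonempty) : WithinPotential F π := by
  have hcard := card_dangerousNbrs_eq hF ha hb
  have hcardT := hne.card_pos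
  have hcardU := hned.card_pos
  have h0 := card_empty (α := V)
  obtain ⟨z, hz⟩ : (((dangerousNbrs F π a).erase b).erase d).Nonempty := card_pos.1 (by
    rw [card_erase_of_mem (by grind), card_erase_of_mem hb]
    omega)
  have hcardz := card_singleton z
  set T := privateNbrs F π a b \ privateNbrs F π a d
  have hTd : #(T ∩ dangerousNbrs F π d) = 0 :=
    card_eq_zero.2 (by grind [mem_privateNbrs])
  have hcover : #((privateNbrs F π a b ∪ privateNbrs F π a d) \ (T ∪ privateNbrs F π a d)) = 0 :=
    card_eq_zero.2 (by grind)
  by_cases h1 : #T % 6 = 1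
  · obtain ⟨y, hy⟩ := hned
    have hcovery : #((privateNbrs F π a b ∪ privateNbrs F π a d) \
        (T ∪ (privateNbrs F π a d).erase y)) = 1 := card_eq_one.2 ⟨y, by grind⟩
    have hcarde := card_erase_of_mem hy
    refine withinPotential_of_three_stars hH hF ha hb hd hbd (T := T)
      (U := (privateNbrs F π a d).erase y) (K := ∅) (P := {z}) (s := #(dangerousNbrs F π a) - 3)
      sdiff_subset (erase_subset _ _) (disjoint_left.2 (by grind)) (empty_subset _)
      (notMem_empty d) (by grind) (by grind) (by grind) (disjoint_empty_left _)
      (by omega) (by omega) hTd ?_ ?_ ?_ <;> unfold starCost <;> omega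
  by_cases h05 : #T % 6 = 0 ∨ #T % 6 = 5
  · refine withinPotential_of_three_stars hH hF ha hb hd hbd (T := T)
      (U := privateNbrs F π a d) (K := ∅) (P := {z}) (s := #(dangerousNbrs F π a) - 3)
      sdiff_subset subset_rfl sdiff_disjoint (empty_subset _)
      (notMem_empty d) (by grind) (by grind) (by grind) (disjoint_empty_left _)
      (by omega) (by omega) hTd ?_ ?_ ?_ <;> unfold starCost <;> omega
  · obtain ⟨i, hi⟩ : ((dangerousNbrs F π a ∩ dangerousNbrs F π b).erase d).Nonempty :=
      card_pos.1 (by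
        have := pred_card_le_card_erase (s := dangerousNbrs F π a ∩ dangerousNbrs F π b) (a := d)
        omega)
    have hcardi := card_singleton i
    refine withinPotential_of_three_stars hH hF ha hb hd hbd (T := T)
      (U := privateNbrs F π a d) (K := {i}) (P := ∅) (s := #(dangerousNbrs F π a) - 3)
      sdiff_subset subset_rfl sdiff_disjoint (by grind) (by grind) (empty_subset _)
      (notMem_empty b) (notMem_empty d) (disjoint_empty_right _)
      (by omega) (by omega) hTd ?_ ?_ ?_ <;> unfold starCost <;> omega

theorem withinPotential_of_privateNbrs_eq (hH : WithinPotentialBelow F) (hF : Loopless F)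
    (ha : a ∈ dangerous F π) (hb : b ∈ dangerousNbrs F π a) (hd : d ∈ dangerousNbrs F π a)
    (hbd : b ≠ d) (hA : #(dangerousNbrs F π a) % 6 = 4) (hmod : #(privateNbrs F π a d) % 6 = 0)
    (hne : (privateNbrs F π a d).Nonempty) (heq : privateNbrs F π a b = privateNbrs F π a d) :
    WithinPotential F π := by
  obtain ⟨z, hz⟩ : (((dangerousNbrs F π a).erase b).erase d).Nonempty := card_pos.1 (by
    rw [card_erase_of_mem (by grind), card_erase_of_mem hb]
    omega)
  obtain ⟨y, hy⟩ := hne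
  have hpos := card_pos.2 ⟨y, hy⟩
  have hcarde := card_erase_of_mem hy
  have h0 := card_empty (α := V)
  have hcardz := card_singleton z
  have hcardy := card_singleton y
  have hcover : #((privateNbrs F π a b ∪ privateNbrs F π a d) \
      ({y} ∪ (privateNbrs F π a d).erase y)) = 0 := card_eq_zero.2 (by grind)
  have hyd : {y} ∩ dangerousNbrs F π d = {y} :=
    inter_eq_left.2 (singleton_subset_iff.2 (mem_privateNbrs.1 hy).1)
  refine withinPotential_of_three_stars hH hF ha hb hd hbd (T := {y})
    (U := (privateNbrs F π a d).erase y) (K := ∅) (P := {z}) (s := #(dangerousNbrs F π a) - 3)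
    (by grind) (erase_subset _ _) (disjoint_singleton_left.2 (notMem_erase y _)) (empty_subset _)
    (notMem_empty d) (by grind) (by grind) (by grind) (disjoint_empty_left _)
    (by omega) (by omega) (hyd ▸ hcardy) ?_ ?_ ?_ <;> unfold starCost <;> omega

theorem dangerousNbrs_subset_of_privateNbrs_eq_empty (h : privateNbrs F π a b = ∅) :
    dangerousNbrs F π b ⊆ insert a (dangerousNbrs F π a) :=
  sdiff_eq_empty_iff_subset.1 h

theorem withinPotential_of_card_dangerousNbrs_mod_eq_three (hH : WithinPotentialBelow F)
    (hF : Loopless F) (ha : a ∈ dangerous F π) (hA : #(dangerousNbrs F π a) % 6 = 3)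
    (hmod : ∀ b ∈ dangerousNbrs F π a,
      #(dangerousNbrs F π b) % 6 = 3 ∨ #(dangerousNbrs F π b) % 6 = 4) :
    WithinPotential F π := by
  by_cases hpriv : ∃ b ∈ dangerousNbrs F π a, (privateNbrs F π a b).Nonempty
  · obtain ⟨b, hb, hne⟩ := hpriv
    exact withinPotential_of_card_mod_eq_three hH hF ha hb hA (hmod b hb) hne
  · simp only [not_exists, not_and, not_nonempty_iff_eq_empty] at hpriv
    refine withinPotential_of_dangerousNbrs_subset hH hF ha (empty_subset _) (by simp)
      (by simpa using hA) fun x hx => ?_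
    exact dangerousNbrs_subset_of_privateNbrs_eq_empty (hpriv x (mem_sdiff.1 hx).1)

theorem withinPotential_of_two_privateNbrs_nonempty (hH : WithinPotentialBelow F)
    (hF : Loopless F) (ha : a ∈ dangerous F π) (hA : #(dangerousNbrs F π a) % 6 = 4)
    (hmod : ∀ b ∈ dangerousNbrs F π a, #(dangerousNbrs F π b) % 6 = 4)
    (hpriv : ∀ b ∈ dangerousNbrs F π a, #(privateNbrs F π a b) % 6 = 0)
    (hb : b ∈ dangerousNbrs F π a) (hd : d ∈ dangerousNbrs F π a) (hbd : b ≠ d)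
    (hneb : (privateNbrs F π a b).Nonempty) (hned : (privateNbrs F π a d).Nonempty) :
    WithinPotential F π := by
  rcases (privateNbrs F π a b \ privateNbrs F π a d).eq_empty_or_nonempty with hsub | hne
  · rcases (privateNbrs F π a d \ privateNbrs F π a b).eq_empty_or_nonempty with hsub' | hne
    · exact withinPotential_of_privateNbrs_eq hH hF ha hb hd hbd hA (hpriv d hd) hned
        (subset_antisymm (sdiff_eq_empty_iff_subset.1 hsub) (sdiff_eq_empty_iff_subset.1 hsub'))
    · exact withinPotential_of_privateNbrs_sdiff_nonempty hH hF ha hd hb hbd.symm hA (hmod d hd)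
        (hpriv d hd) (hpriv b hb) hneb hne
  · exact withinPotential_of_privateNbrs_sdiff_nonempty hH hF ha hb hd hbd hA (hmod b hb)
      (hpriv b hb) (hpriv d hd) hned hne

theorem withinPotential_of_card_dangerousNbrs_mod_eq_four (hH : WithinPotentialBelow F)
    (hF : Loopless F) (ha : a ∈ dangerous F π) (hA : #(dangerousNbrs F π a) % 6 = 4)
    (hmod : ∀ b ∈ dangerousNbrs F π a, #(dangerousNbrs F π b) % 6 = 4) :
    WithinPotential F π := by
  by_cases hpriv : ∃ b ∈ dangerousNbrs F π a, #(privateNbrs F π a b) % 6 ≠ 0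
  · obtain ⟨b, hb, h0⟩ := hpriv
    exact withinPotential_of_card_mod_eq_four hH hF ha hb hA (Or.inr (hmod b hb)) h0
  push Not at hpriv
  by_cases hunique : ∃ z ∈ dangerousNbrs F π a, ∀ x ∈ dangerousNbrs F π a, x ≠ z →
      privateNbrs F π a x = ∅
  · obtain ⟨z, hz, hempty⟩ := hunique
    have hcard := card_sdiff_of_subset (singleton_subset_iff.2 hz)
    rw [card_singleton] at hcard
    refine withinPotential_of_dangerousNbrs_subset hH hF ha (singleton_subset_iff.2 hz)
      (by simp) (by omega) fun x hx => ?_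
    exact dangerousNbrs_subset_of_privateNbrs_eq_empty (hempty x (by grind) (by grind))
  · have hother : ∀ z ∈ dangerousNbrs F π a, ∃ x ∈ dangerousNbrs F π a, x ≠ z ∧
        (privateNbrs F π a x).Nonempty := by
      simpa only [not_exists, not_and, not_forall, exists_prop, ← nonempty_iff_ne_empty]
        using hunique
    obtain ⟨c, hc⟩ : (dangerousNbrs F π a).Nonempty := card_pos.1 (by omega)
    obtain ⟨b, hb, -, hneb⟩ := hother c hc
    obtain ⟨d, hd, hdb, hned⟩ := hother b hb
    exact withinPotential_of_two_privateNbrs_nonempty hH hF ha hA hmod hpriv hb hd hdb.symm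
      hneb hned

theorem withinPotential_of_dangerousNbrs_nonempty (hH : WithinPotentialBelow F) (hF : Loopless F)
    (ha : a ∈ dangerous F π) (hne : (dangerousNbrs F π a).Nonempty) : WithinPotential F π := by
  by_contra hcontra
  have hmod : ∀ v ∈ dangerous F π, (dangerousNbrs F π v).Nonempty →
      #(dangerousNbrs F π v) % 6 = 3 ∨ #(dangerousNbrs F π v) % 6 = 4 := by
    intro v hv hnev
    by_contra h34
    rw [not_or] at h34
    exact hcontra (withinPotential_of_card_dangerousNbrs_mod hH hF hv hnev h34.1 h34.2)
  have hnbr {v x : V} (hv : v ∈ dangerous F π) (hx : x ∈ dangerousNbrs F π v) :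
      x ∈ dangerous F π ∧ (dangerousNbrs F π x).Nonempty :=
    ⟨(mem_dangerousNbrs.1 hx).1, v, mem_dangerousNbrs_symm hv hx⟩
  have hfour : ∀ v ∈ dangerous F π, (dangerousNbrs F π v).Nonempty →
      #(dangerousNbrs F π v) % 6 = 4 := fun v hv hnev =>
    (hmod v hv hnev).resolve_left fun h3 => hcontra <|
      withinPotential_of_card_dangerousNbrs_mod_eq_three hH hF hv h3 fun x hx =>
        hmod x (hnbr hv hx).1 (hnbr hv hx).2
  exact hcontra <| withinPotential_of_card_dangerousNbrs_mod_eq_four hH hF ha (hfour a ha hne)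
    fun x hx => hfour x (hnbr ha hx).1 (hnbr ha hx).2

theorem WithinPotentialBelow.withinPotential (hH : WithinPotentialBelow F) (hF : Loopless F)
    (π : V → ℕ) : WithinPotential F π := by
  rcases (dangerous F π).eq_empty_or_nonempty with hE | ⟨a, ha⟩
  · rcases F.eq_empty_or_nonempty with rfl | ⟨e, he⟩
    · exact withinPotential_empty π
    induction e with | _ x y =>
    by_cases heven : ∃ v, 0 < degreeIn F v ∧ Even (degreeIn F v + π v)
    · obtain ⟨v, hv, hveven⟩ := heven
      exact withinPotential_of_even hH hF hE hv hveven
    · exact withinPotential_of_forall_odd hH hF (degreeIn_pos_of_mem he) (by simpa using heven)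
  · by_cases hind : ∀ v ∈ dangerous F π, dangerousNbrs F π v = ∅
    · exact withinPotential_of_dangerousNbrs_eq_empty hH hF ha hind
    · simp only [not_forall, ← Ne.eq_def, ← nonempty_iff_ne_empty] at hind
      obtain ⟨v, hv, hne⟩ := hind
      exact withinPotential_of_dangerousNbrs_nonempty hH hF hv hne

theorem Loopless.withinPotential (hF : Loopless F) (π : V → ℕ) : WithinPotential F π := by
  induction hn : #F using Nat.strong_induction_on generalizing F π with
  | _ n ih =>
    have hH : WithinPotentialBelow F := fun F' hlt hF' π' => ih #F' (hn ▸ hlt) hF' π' rfl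
    exact hH.withinPotential hF π

end Induction

section Walks

variable {V : Type*} {G : SimpleGraph V}

theorem exists_walk_edges_eq (x : V) (l : List V)
    (hG : ∀ e ∈ pathEdges (x :: l), e ∈ G.edgeSet) :
    ∃ (y : V) (w : G.Walk x y), w.support = x :: l ∧
      (w.edges : Multiset (Sym2 V)) = pathEdges (x :: l) := by
  induction l generalizing x with
  | nil => exact ⟨x, .nil, rfl, rfl⟩
  | cons z l ih =>
    obtain ⟨y, w, hsupport, hedges⟩ := ih z fun e he => hG e (Multiset.mem_cons_of_mem he)
    have hxz : G.Adj x z := hG s(x, z) (Multiset.mem_cons_self _ _)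
    refine ⟨y, .cons hxz w, by rw [SimpleGraph.Walk.support_cons, hsupport], ?_⟩
    rw [SimpleGraph.Walk.edges_cons, ← Multiset.cons_coe, hedges, pathEdges]

theorem IsPathFamily.exists_walks {L : List (List V)} (hL : IsPathFamily (L : Multiset (List V)))
    (hnodup : (familyEdges (L : Multiset (List V))).Nodup)
    (hG : ∀ e ∈ familyEdges (L : Multiset (List V)), e ∈ G.edgeSet) :
    ∃ W : List (Σ (a : V) (b : V), G.Walk a b), W.length = L.length ∧
      (∀ p ∈ W, p.2.2.IsPath) ∧
      W.Pairwise (fun p q => ∀ e ∈ p.2.2.edges, e ∉ q.2.2.edges) ∧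
      ∀ e, e ∈ familyEdges (L : Multiset (List V)) ↔ ∃ p ∈ W, e ∈ p.2.2.edges := by
  induction L with
  | nil => exact ⟨[], by simp [familyEdges]⟩
  | cons l L ih =>
    rw [← Multiset.cons_coe] at hL hnodup hG ⊢
    rw [familyEdges_cons] at hnodup hG ⊢
    obtain ⟨⟨hne, hl⟩, hL⟩ := isPathFamily_cons.1 hL
    obtain ⟨-, hnodupL, hdisj⟩ := Multiset.nodup_add.1 hnodup
    obtain ⟨W, hlength, hpath, hpairwise, hmem⟩ :=
      ih hL hnodupL fun e he => hG e (Multiset.mem_add.2 (Or.inr he))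
    obtain ⟨x, l, rfl⟩ := List.exists_cons_of_ne_nil hne
    obtain ⟨y, w, hsupport, hedges⟩ :=
      exists_walk_edges_eq x l fun e he => hG e (Multiset.mem_add.2 (Or.inl he))
    have hw : w.IsPath := (SimpleGraph.Walk.isPath_def w).2 (hsupport ▸ hl)
    have hmemw (e : Sym2 V) : e ∈ pathEdges (x :: l) ↔ e ∈ w.edges := by
      rw [← hedges, Multiset.mem_coe]
    refine ⟨⟨x, y, w⟩ :: W, by simp [hlength], List.forall_mem_cons.2 ⟨hw, hpath⟩,
      List.pairwise_cons.2 ⟨fun q hq e he heq => ?_, hpairwise⟩, fun e => ?_⟩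
    · exact Multiset.disjoint_left.1 hdisj ((hmemw e).2 he) ((hmem e).2 ⟨q, hq, heq⟩)
    · rw [Multiset.mem_add, hmem, hmemw]
      simp

theorem loopless_edgeFinset (G : SimpleGraph V) [Fintype G.edgeSet] : Loopless G.edgeFinset :=
  fun _ hv => G.irrefl (SimpleGraph.mem_edgeFinset.1 hv)

variable [Fintype V] [DecidableEq V] (G) [DecidableRel G.Adj]

theorem degreeIn_edgeFinset (v : V) : degreeIn G.edgeFinset v = G.degree v := by
  rw [degreeIn, ← SimpleGraph.incidenceFinset_eq_filter, SimpleGraph.card_incidenceFinset_eq_degree]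

theorem potential_edgeFinset : potential G.edgeFinset (fun _ => 0) =
    3 * #{v | Odd (G.degree v)} + 4 * #{v | Even (G.degree v) ∧ 0 < G.degree v} := by
  rw [potential, card_filter, card_filter, mul_sum, mul_sum, ← sum_add_distrib]
  refine sum_congr rfl fun v _ => ?_
  rw [degreeIn_edgeFinset, vertexWeight]
  grind

end Walks

end PathDecomposition

open PathDecomposition in
theorem stmt_11_general {V : Type*} [Fintype V] (G : SimpleGraph V) [DecidableRel G.Adj]
    (u g : ℕ)
    (hu : u = (Finset.univ.filter fun v => Odd (G.degree v)).card)
    (hg : g = (Finset.univ.filter fun v =>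
      Even (G.degree v) ∧ 0 < G.degree v).card) :
    ∃ L : List (Σ (a : V) (b : V), G.Walk a b),
      L.length ≤ u / 2 + 2 * g / 3 ∧
      (∀ p ∈ L, p.2.2.IsPath) ∧
      List.Pairwise (fun p q => ∀ e ∈ p.2.2.edges, e ∉ q.2.2.edges) L ∧
      (∀ e : Sym2 V, e ∈ G.edgeSet ↔ ∃ p ∈ L, e ∈ p.2.2.edges) := by
  classical
  obtain ⟨N, hN, L, hL, hedges, -, hcard⟩ := (loopless_edgeFinset G).withinPotential fun _ => 0
  have hmem (e : Sym2 V) : e ∈ familyEdges L ↔ e ∈ G.edgeSet := by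
    rw [hedges, Finset.mem_val, SimpleGraph.mem_edgeFinset]
  obtain ⟨L, rfl⟩ := Quot.exists_rep L
  obtain ⟨W, hlength, hpath, hpairwise, hW⟩ :=
    hL.exists_walks (hedges ▸ G.edgeFinset.nodup) fun e he => (hmem e).1 he
  refine ⟨W, ?_, hpath, hpairwise, fun e => (hmem e).symm.trans (hW e)⟩
  have heven : Even u := hu ▸ G.even_card_odd_degree_vertices
  have hLN : L.length ≤ N := hcard
  rw [potential_edgeFinset, ← hu, ← hg] at hN
  rw [hlength]
  grind

/-- Dean–Kouider, Yan: if a simple graph G (possibly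
disconnected) has u vertices of odd degree and g nonisolated vertices of even
degree, then E(G) can be partitioned into at most u/2 + ⌊(2/3)g⌋ paths. -/
theorem stmt_11 (n : ℕ) (G : SimpleGraph (Fin n)) [DecidableRel G.Adj]
    (u g : ℕ)
    (hu : u = (Finset.univ.filter fun v => Odd (G.degree v)).card)
    (hg : g = (Finset.univ.filter fun v =>
      Even (G.degree v) ∧ 0 < G.degree v).card) :
    ∃ L : List (Σ (a : Fin n) (b : Fin n), G.Walk a b),
      L.length ≤ u / 2 + 2 * g / 3 ∧
      (∀ p ∈ L, p.2.2.IsPath) ∧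
      List.Pairwise (fun p q => ∀ e ∈ p.2.2.edges, e ∉ q.2.2.edges) L ∧
      (∀ e : Sym2 (Fin n), e ∈ G.edgeSet ↔ ∃ p ∈ L, e ∈ p.2.2.edges) :=
  stmt_11_general G u g hu hg
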